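/- arXiv:2406.06231 — 8 statements merged into one kernel-verified Lean document; each statement's English description precedes it below -/
import Mathlib

section
/- Assume p(θ) is a proper prior, and that there exists a sequence of axis-aligned rectangles R_{n0} such that p_{n0} := P(s ∈ R_{n0} | n = n0) satisfies p_{n0} > 0 and KS_{n0}/p_{n0} → 0, where KS_{n0} = KS(p(s,θ | n = n0), p(s,θ | n_dp = n0)). Suppose further that there exist b' > 0, a sequence θ_{n0}, and a random variable Y with continuous cdf F_Y such that n0^{b'}(θ − θ_{n0}) conditional on (n = n0, s ∈ R_{n0}) converges in distribution to Y. Then n0^{b'}(θ − θ_{n0}) conditional on (n_dp = n0, s ∈ R_{n0}) also converges in distribution to Y. -/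
open MeasureTheory Filter Topology Asymptotics
open scoped ENNReal

noncomputable def tvDist {α : Type*} [MeasurableSpace α] (P Q : Measure α) : ℝ :=
  ⨆ S : {S : Set α // MeasurableSet S}, |(P S.1).toReal - (Q S.1).toReal|

def IsRect {d : ℕ} (R : Set (Fin d → ℝ)) : Prop :=
  ∃ I : Fin d → Set ℝ, (∀ i, (I i).OrdConnected) ∧ R = Set.univ.pi I

noncomputable def ksDist {d : ℕ} (P Q : Measure (Fin d → ℝ)) : ℝ :=
  ⨆ R : {R : Set (Fin d → ℝ) // IsRect R}, |(P R.1).toReal - (Q R.1).toReal|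

def IsRectProd {p d : ℕ} (R : Set ((Fin p → ℝ) × (Fin d → ℝ))) : Prop :=
  ∃ A B, IsRect A ∧ IsRect B ∧ R = A ×ˢ B

noncomputable def ksDistProd {p d : ℕ} (P Q : Measure ((Fin p → ℝ) × (Fin d → ℝ))) : ℝ :=
  ⨆ R : {R : Set ((Fin p → ℝ) × (Fin d → ℝ)) // IsRectProd R}, |(P R.1).toReal - (Q R.1).toReal|

def TendstoInDist {ι α : Type*} [MeasurableSpace α] [TopologicalSpace α]
    (l : Filter ι) (μ : ι → Measure α) (ν : Measure α) : Prop :=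
  ∀ f : BoundedContinuousFunction α ℝ,
    Tendsto (fun n => ∫ x, f x ∂(μ n)) l (𝓝 (∫ x, f x ∂ν))

noncomputable def scaleShift {d : ℕ} (b a : ℝ) (m : ℝ) (c : Fin d → ℝ) :
    (Fin d → ℝ) → (Fin d → ℝ) :=
  fun s => m ^ b • (m ^ (-a) • s - c)

noncomputable def mcdf {d : ℕ} (μ : Measure (Fin d → ℝ)) (t : Fin d → ℝ) : ℝ :=
  (μ {x | ∀ i, x i ≤ t i}).toReal

/-!
A conditional probability given `s ∈ R` is a ratio of two rectangle probabilities whenever the event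
on `θ` is itself a rectangle, and shifting and scaling `θ` preserves rectangles. Replacing one joint
law by the other changes numerator and denominator by at most the KS distance, hence the ratio by at
most twice the KS distance divided by `P(s ∈ R)`. So the two rescaled conditional laws agree
asymptotically on every rectangle; as the rectangles whose boundary is null for the limit form a
π-system containing arbitrarily small neighbourhoods of every point, this forces the same weak
limit.
-/

namespace IsRect

variable {d : ℕ} {A B : Set (Fin d → ℝ)}

theorem measurableSet (hA : IsRect A) : MeasurableSet A := by
  obtain ⟨I, hI, rfl⟩ := hA
  exact MeasurableSet.univ_pi fun i => (hI i).measurableSet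

theorem inter (hA : IsRect A) (hB : IsRect B) : IsRect (A ∩ B) := by
  obtain ⟨I, hI, rfl⟩ := hA
  obtain ⟨J, hJ, rfl⟩ := hB
  exact ⟨fun i => I i ∩ J i, fun i => (hI i).inter (hJ i), Set.pi_inter_distrib.symm⟩

theorem univ : IsRect (Set.univ : Set (Fin d → ℝ)) :=
  ⟨fun _ => Set.univ, fun _ => Set.ordConnected_univ, (Set.pi_univ _).symm⟩

theorem ball (x : Fin d → ℝ) {r : ℝ} (hr : 0 < r) : IsRect (Metric.ball x r) :=
  ⟨fun i => Metric.ball (x i) r, fun i => (convex_ball (x i) r).ordConnected, ball_pi x hr⟩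

theorem preimage_smul_sub (hA : IsRect A) (c : ℝ) (t : Fin d → ℝ) :
    IsRect ((fun x => c • (x - t)) ⁻¹' A) := by
  obtain ⟨I, hI, rfl⟩ := hA
  refine ⟨fun i => (fun y => c * (y - t i)) ⁻¹' I i, fun i => ?_, ?_⟩
  · rcases le_total 0 c with hc | hc
    · exact (hI i).preimage_mono fun _ _ hab =>
        mul_le_mul_of_nonneg_left (sub_le_sub_right hab _) hc
    · exact (hI i).preimage_anti fun _ _ hab =>
        mul_le_mul_of_nonpos_left (sub_le_sub_right hab _) hc
  · ext x
    simp [Set.mem_pi]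

theorem isPiSystem_null_frontier (Y : Measure (Fin d → ℝ)) :
    IsPiSystem {A | IsRect A ∧ Y (frontier A) = 0} := by
  rintro A ⟨hA, hA₀⟩ B ⟨hB, hB₀⟩ -
  exact ⟨hA.inter hB, null_frontier_inter hA₀ hB₀⟩

theorem exists_mem_nhds_subset_null_frontier (Y : Measure (Fin d → ℝ)) [SFinite Y]
    {x : Fin d → ℝ} {u : Set (Fin d → ℝ)} (hu : u ∈ 𝓝 x) :
    ∃ A, (IsRect A ∧ Y (frontier A) = 0) ∧ A ∈ 𝓝 x ∧ A ⊆ u := by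
  obtain ⟨ε, hε, hεu⟩ := Metric.mem_nhds_iff.1 hu
  obtain ⟨r, ⟨hr, hrε⟩, hr₀⟩ := exists_null_frontier_thickening Y {x} hε
  rw [Metric.thickening_singleton] at hr₀
  exact ⟨Metric.ball x r, ⟨IsRect.ball x hr, hr₀⟩, Metric.ball_mem_nhds x hr,
    (Metric.ball_subset_ball hrε.le).trans hεu⟩

end IsRect

section WeakConvergence

variable {ι κ α : Type*} {l : Filter ι}

theorem tendstoInDist_comap_iff [MeasurableSpace α] [TopologicalSpace α] {μ : ι → Measure α}
    {Y : Measure α} {e : κ → ι} (he : Set.range e ∈ l) :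
    TendstoInDist (l.comap e) (μ ∘ e) Y ↔ TendstoInDist l μ Y :=
  forall_congr' fun f => tendsto_comap'_iff (m := fun i => ∫ x, f x ∂(μ i)) he

theorem TendstoInDist.tendsto_measureReal_of_null_frontier [MeasurableSpace α] [TopologicalSpace α]
    [OpensMeasurableSpace α] [HasOuterApproxClosed α] {μ : ι → Measure α}
    [∀ i, IsProbabilityMeasure (μ i)] {Y : Measure α} [IsProbabilityMeasure Y]
    (h : TendstoInDist l μ Y) {A : Set α} (hA : Y (frontier A) = 0) :
    Tendsto (fun i => (μ i).real A) l (𝓝 (Y.real A)) := by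
  let law : ι → ProbabilityMeasure α := fun i => ⟨μ i, inferInstance⟩
  let limit : ProbabilityMeasure α := ⟨Y, inferInstance⟩
  have hweak : Tendsto law l (𝓝 limit) :=
    ProbabilityMeasure.tendsto_iff_forall_integral_tendsto.2 h
  exact (ENNReal.tendsto_toReal (measure_ne_top Y A)).comp
    (ProbabilityMeasure.tendsto_measure_of_null_frontier_of_tendsto' hweak hA)

variable [l.IsCountablyGenerated] {d : ℕ} {μ ν : ι → Measure (Fin d → ℝ)}
  {Y : Measure (Fin d → ℝ)} [IsProbabilityMeasure Y]

theorem tendstoInDist_of_forall_isRect [∀ i, IsProbabilityMeasure (μ i)]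
    (h : ∀ A, IsRect A → Y (frontier A) = 0 →
      Tendsto (fun i => (μ i).real A) l (𝓝 (Y.real A))) :
    TendstoInDist l μ Y := by
  let law : ι → ProbabilityMeasure (Fin d → ℝ) := fun i => ⟨μ i, inferInstance⟩
  let limit : ProbabilityMeasure (Fin d → ℝ) := ⟨Y, inferInstance⟩
  have hweak : Tendsto law l (𝓝 limit) :=
    (IsRect.isPiSystem_null_frontier Y).tendsto_probabilityMeasure_of_tendsto_of_mem
      (fun A hA => hA.1.measurableSet)
      (fun u hu x hx => IsRect.exists_mem_nhds_subset_null_frontier Y (hu.mem_nhds hx))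
      (fun A hA => NNReal.tendsto_coe.1 (h A hA.1 hA.2))
  exact ProbabilityMeasure.tendsto_iff_forall_integral_tendsto.1 hweak

theorem TendstoInDist.of_tendsto_measureReal_sub_isRect
    (hμ : ∀ᶠ i in l, IsProbabilityMeasure (μ i)) (hν : ∀ᶠ i in l, IsProbabilityMeasure (ν i))
    (hsub : ∀ A, IsRect A → Tendsto (fun i => (μ i).real A - (ν i).real A) l (𝓝 0))
    (h : TendstoInDist l μ Y) : TendstoInDist l ν Y := by
  -- Weak convergence in Mathlib is a statement about families of probability measures, so the
  -- indices for which `μ i` or `ν i` is not one are removed first.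
  let e : {i // IsProbabilityMeasure (μ i) ∧ IsProbabilityMeasure (ν i)} → ι := Subtype.val
  have he : Set.range e ∈ l := by
    filter_upwards [hμ, hν] with i hi hi'
    exact ⟨⟨i, hi, hi'⟩, rfl⟩
  have : ∀ j, IsProbabilityMeasure ((μ ∘ e) j) := fun j => j.2.1
  have : ∀ j, IsProbabilityMeasure ((ν ∘ e) j) := fun j => j.2.2
  rw [← tendstoInDist_comap_iff he] at h ⊢
  refine tendstoInDist_of_forall_isRect fun A hA hA₀ => ?_
  have hdiff := (h.tendsto_measureReal_of_null_frontier hA₀).sub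
    ((hsub A hA).comp (tendsto_comap (f := e)))
  simpa only [Function.comp_apply, sub_sub_cancel, sub_zero] using hdiff

end WeakConvergence

theorem isProbabilityMeasure_sum_smul {κ Ω : Type*} [MeasurableSpace Ω] {w : κ → ℝ≥0∞}
    (hw : ∑' k, w k = 1) (μ : κ → Measure Ω) [∀ k, IsProbabilityMeasure (μ k)] :
    IsProbabilityMeasure (Measure.sum fun k => w k • μ k) where
  measure_univ := by simp [Measure.sum_apply, hw]

section Conditioning

open scoped ProbabilityTheory

theorem abs_div_sub_div_le_two_mul_div {a b p q K : ℝ} (hp : 0 < p) (hq : 0 < q) (hb : 0 ≤ b)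
    (hbq : b ≤ q) (hab : |a - b| ≤ K) (hpq : |p - q| ≤ K) :
    |a / p - b / q| ≤ 2 * (K / p) := by
  have hratio : |b / q| ≤ 1 := by
    rw [abs_of_nonneg (div_nonneg hb hq.le)]
    exact (div_le_one hq).2 hbq
  calc |a / p - b / q| = |(a - b) / p - b / q * ((p - q) / p)| := by
        congr 1
        field_simp
        ring
    _ ≤ |(a - b) / p| + |b / q * ((p - q) / p)| := abs_sub _ _
    _ = |a - b| / p + |b / q| * (|p - q| / p) := by
        rw [abs_mul, abs_div (a - b), abs_div (p - q), abs_of_pos hp]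
    _ ≤ K / p + 1 * (K / p) := by gcongr
    _ = 2 * (K / p) := by ring

theorem abs_cond_real_sub_cond_real_le {Ω : Type*} [MeasurableSpace Ω] {P Q : Measure Ω}
    [IsFiniteMeasure P] [IsFiniteMeasure Q] {S E : Set Ω} {K : ℝ} (hS : MeasurableSet S)
    (hPS : P S ≠ 0) (hQS : Q S ≠ 0) (hKS : |P.real S - Q.real S| ≤ K)
    (hKE : |P.real (S ∩ E) - Q.real (S ∩ E)| ≤ K) :
    |P[|S].real E - Q[|S].real E| ≤ 2 * (K / P.real S) := by
  have cond_real_eq (M : Measure Ω) : M[|S].real E = M.real (S ∩ E) / M.real S := by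
    simp only [Measure.real, ProbabilityTheory.cond_apply hS, ENNReal.toReal_mul,
      ENNReal.toReal_inv, div_eq_inv_mul]
  rw [cond_real_eq P, cond_real_eq Q]
  exact abs_div_sub_div_le_two_mul_div (ENNReal.toReal_pos hPS (measure_ne_top P S))
    (ENNReal.toReal_pos hQS (measure_ne_top Q S)) measureReal_nonneg
    (measureReal_mono Set.inter_subset_left) hKE hKS

variable {p d : ℕ}

/-- The law of `c • (θ - t)` conditional on `s ∈ R`, when `(θ, s)` has joint law `P`. It is the zero
measure if the event `s ∈ R` is `P`-null. -/
noncomputable def rescaledCondLaw (P : Measure ((Fin p → ℝ) × (Fin d → ℝ))) (R : Set (Fin d → ℝ))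
    (c : ℝ) (t : Fin p → ℝ) : Measure (Fin p → ℝ) :=
  P[|Set.univ ×ˢ R].map fun z => c • (z.1 - t)

variable {P Q : Measure ((Fin p → ℝ) × (Fin d → ℝ))} [IsFiniteMeasure P] {R : Set (Fin d → ℝ)}

theorem isProbabilityMeasure_rescaledCondLaw (hP : P (Set.univ ×ˢ R) ≠ 0) (c : ℝ)
    (t : Fin p → ℝ) : IsProbabilityMeasure (rescaledCondLaw P R c t) := by
  have := ProbabilityTheory.cond_isProbabilityMeasure hP
  exact Measure.isProbabilityMeasure_map (by fun_prop)

variable [IsFiniteMeasure Q]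

theorem abs_measureReal_sub_le_ksDistProd {A : Set (Fin p → ℝ)} {B : Set (Fin d → ℝ)}
    (hA : IsRect A) (hB : IsRect B) :
    |P.real (A ×ˢ B) - Q.real (A ×ˢ B)| ≤ ksDistProd P Q := by
  let gap (S : {S : Set ((Fin p → ℝ) × (Fin d → ℝ)) // IsRectProd S}) : ℝ :=
    |P.real S.1 - Q.real S.1|
  have hbdd : BddAbove (Set.range gap) := by
    refine ⟨max (P.real Set.univ) (Q.real Set.univ), ?_⟩
    rintro _ ⟨S, rfl⟩
    exact abs_sub_le_of_nonneg_of_le measureReal_nonneg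
      (le_max_of_le_left (measureReal_mono (Set.subset_univ _))) measureReal_nonneg
      (le_max_of_le_right (measureReal_mono (Set.subset_univ _)))
  exact le_ciSup hbdd ⟨A ×ˢ B, A, B, hA, hB, rfl⟩

theorem measure_ne_zero_of_ksDistProd_div_lt_one (hR : IsRect R) (hP : P (Set.univ ×ˢ R) ≠ 0)
    (h : ksDistProd P Q / P.real (Set.univ ×ˢ R) < 1) : Q (Set.univ ×ˢ R) ≠ 0 := by
  intro hQ
  have hP_pos : 0 < P.real (Set.univ ×ˢ R) := ENNReal.toReal_pos hP (measure_ne_top P _)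
  have hP_le : P.real (Set.univ ×ˢ R) ≤ ksDistProd P Q := by
    simpa [Measure.real, hQ] using
      abs_measureReal_sub_le_ksDistProd (P := P) (Q := Q) IsRect.univ hR
  exact h.not_ge ((one_le_div hP_pos).2 hP_le)

theorem abs_rescaledCondLaw_real_sub_le (hR : IsRect R) (hP : P (Set.univ ×ˢ R) ≠ 0)
    (hQ : Q (Set.univ ×ˢ R) ≠ 0) (c : ℝ) (t : Fin p → ℝ) {A : Set (Fin p → ℝ)} (hA : IsRect A) :
    |(rescaledCondLaw P R c t).real A - (rescaledCondLaw Q R c t).real A| ≤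
      2 * (ksDistProd P Q / P.real (Set.univ ×ˢ R)) := by
  have hmeas : Measurable fun z : (Fin p → ℝ) × (Fin d → ℝ) => c • (z.1 - t) := by fun_prop
  have hinter : Set.univ ×ˢ R ∩ (fun z : (Fin p → ℝ) × (Fin d → ℝ) => c • (z.1 - t)) ⁻¹' A =
      ((fun x => c • (x - t)) ⁻¹' A) ×ˢ R := by
    ext z
    simp [and_comm]
  rw [rescaledCondLaw, rescaledCondLaw, map_measureReal_apply hmeas hA.measurableSet,
    map_measureReal_apply hmeas hA.measurableSet]
  refine abs_cond_real_sub_cond_real_le (MeasurableSet.univ.prod hR.measurableSet) hP hQ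
    (abs_measureReal_sub_le_ksDistProd IsRect.univ hR) ?_
  rw [hinter]
  exact abs_measureReal_sub_le_ksDistProd (hA.preimage_smul_sub c t) hR

end Conditioning

theorem statement3_general {ι : Type*} {l : Filter ι} [l.IsCountablyGenerated] {p d : ℕ}
    (P Q : ι → Measure ((Fin p → ℝ) × (Fin d → ℝ)))
    [∀ i, IsFiniteMeasure (P i)] [∀ i, IsFiniteMeasure (Q i)]
    (R : ι → Set (Fin d → ℝ)) (hR : ∀ i, IsRect (R i))
    (hP : ∀ i, P i (Set.univ ×ˢ R i) ≠ 0)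
    (hKS : Tendsto (fun i => ksDistProd (P i) (Q i) / (P i).real (Set.univ ×ˢ R i)) l (𝓝 0))
    (c : ι → ℝ) (t : ι → Fin p → ℝ) (Y : Measure (Fin p → ℝ)) [IsProbabilityMeasure Y]
    (hconv : TendstoInDist l (fun i => rescaledCondLaw (P i) (R i) (c i) (t i)) Y) :
    TendstoInDist l (fun i => rescaledCondLaw (Q i) (R i) (c i) (t i)) Y := by
  have hQ : ∀ᶠ i in l, Q i (Set.univ ×ˢ R i) ≠ 0 :=
    (hKS.eventually_lt_const one_pos).mono fun i hi =>
      measure_ne_zero_of_ksDistProd_div_lt_one (hR i) (hP i) hi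
  refine hconv.of_tendsto_measureReal_sub_isRect
    (.of_forall fun i => isProbabilityMeasure_rescaledCondLaw (hP i) _ _)
    (hQ.mono fun i hi => isProbabilityMeasure_rescaledCondLaw hi _ _) fun A hA => ?_
  have hbound : Tendsto
      (fun i => 2 * (ksDistProd (P i) (Q i) / (P i).real (Set.univ ×ˢ R i))) l (𝓝 0) := by
    simpa only [mul_zero] using hKS.const_mul 2
  exact squeeze_zero_norm' (hQ.mono fun i hi =>
    abs_rescaledCondLaw_real_sub_le (hR i) (hP i) hi (c i) (t i) hA) hbound

/-- Theorem 3.3, ABC posterior convergence: with a proper prior,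
rectangles `R n0` with `p_{n0} = P(s ∈ R_{n0} | n = n0) > 0` and `KS_{n0}/p_{n0} → 0`,
if `n0^{b'} (θ - θ_{n0}) | (n = n0, s ∈ R_{n0})` converges in distribution to `Y`
(which has a continuous cdf), then `n0^{b'} (θ - θ_{n0}) | (n_dp = n0, s ∈ R_{n0})`
converges in distribution to `Y` as well. -/
theorem statement3 {p d : ℕ}
    -- `μB n0` is the joint law `p(θ, s | n = n0)` of the parameter and the DP summary
    (μB : ℕ → Measure ((Fin p → ℝ) × (Fin d → ℝ)))
    (hμB : ∀ n, IsProbabilityMeasure (μB n))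
    -- the (proper) posterior `p(n = k | n_dp = n0)`, supported on k ≥ 1
    (post : ℕ → ℕ → ℝ≥0∞)
    (hpost0 : ∀ n0, post n0 0 = 0) (hpost1 : ∀ n0, ∑' k, post n0 k = 1)
    -- the sequence of rectangles
    (R : ℕ → Set (Fin d → ℝ)) (hR : ∀ n0, IsRect (R n0))
    (hp : ∀ n0, μB n0 (Set.univ ×ˢ R n0) ≠ 0)
    (hKSp : Tendsto (fun n0 =>
        ksDistProd (μB n0) (Measure.sum fun k => post n0 k • μB k) /
          (μB n0 (Set.univ ×ˢ R n0)).toReal) atTop (𝓝 0))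
    (b' : ℝ) (hb' : 0 < b')
    (θseq : ℕ → (Fin p → ℝ))
    (Y : Measure (Fin p → ℝ)) (hY : IsProbabilityMeasure Y)
    (hYcdf : Continuous (mcdf Y))
    -- `n0^{b'}(θ - θ_{n0}) | (n = n0, s ∈ R_{n0})` converges in distribution to `Y`
    (hconv : TendstoInDist atTop
      (fun n0 => ((μB n0 (Set.univ ×ˢ R n0))⁻¹ • (μB n0).restrict (Set.univ ×ˢ R n0)).map
        (fun z => (n0 : ℝ) ^ b' • (z.1 - θseq n0))) Y) :
    TendstoInDist atTop
      (fun n0 =>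
        (((Measure.sum fun k => post n0 k • μB k) (Set.univ ×ˢ R n0))⁻¹ •
            (Measure.sum fun k => post n0 k • μB k).restrict (Set.univ ×ˢ R n0)).map
          (fun z => (n0 : ℝ) ^ b' • (z.1 - θseq n0))) Y := by
  have (n0 : ℕ) := isProbabilityMeasure_sum_smul (hpost1 n0) μB
  exact statement3_general μB _ R hR hp hKSp (fun n0 => (n0 : ℝ) ^ b') θseq Y hconv
end

section
/- Let p(s|x) be the distribution of a (0,δ)-DP mechanism, let p(x|θ,n) be the distribution of n i.i.d. records, and let p(n) be a (possibly improper) prior on n with proper posterior p(n | n_dp). Then TV(p(s | θ, n = n0), p(s | θ, n_dp = n0)) ≤ δ · E_{n | n_dp = n0} |n − n0|, and if p(θ) is a proper prior on θ, then also TV(p(s, θ | n = n0), p(s, θ | n_dp = n0)) ≤ δ · E_{n | n_dp = n0} |n − n0|. -/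
open MeasureTheory Filter Topology Asymptotics
open scoped ENNReal

/-! Removing one of `n + 1` i.i.d. records leaves `n` i.i.d. records, so by convexity of the total
variation distance the laws of the summary at sample sizes `n + 1` and `n` are `δ`-close. The
triangle inequality makes the laws at sizes `k` and `n₀` `δ * |k - n₀|`-close, and averaging over
the posterior of `k`, then over `θ`, is again convexity. -/

section TotalVariation

variable {α β : Type*} [MeasurableSpace α] [MeasurableSpace β]

/-- The total variation distance with values in `ℝ≥0∞`. Truncated subtraction makes the maximum of
the two differences the absolute difference, and no finiteness is needed for the triangle
inequality or for convexity. -/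
noncomputable def tvEDist (P Q : Measure α) : ℝ≥0∞ :=
  ⨆ S : {S : Set α // MeasurableSet S}, max (P S.1 - Q S.1) (Q S.1 - P S.1)

lemma tvEDist_le_iff {P Q : Measure α} {C : ℝ≥0∞} :
    tvEDist P Q ≤ C ↔ ∀ S, MeasurableSet S → P S ≤ Q S + C ∧ Q S ≤ P S + C := by
  simp only [tvEDist, iSup_le_iff, Subtype.forall, max_le_iff, tsub_le_iff_left]

lemma tvEDist_self (P : Measure α) : tvEDist P P = 0 := by
  simp only [tvEDist, max_self, ← bot_eq_zero, iSup_eq_bot]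
  exact fun _ => tsub_self _

lemma tvEDist_comm (P Q : Measure α) : tvEDist P Q = tvEDist Q P := by
  simp only [tvEDist, max_comm]

lemma measure_le_add_tvEDist (P Q : Measure α) {S : Set α} (hS : MeasurableSet S) :
    P S ≤ Q S + tvEDist P Q :=
  (tvEDist_le_iff.1 le_rfl S hS).1

lemma tvEDist_le_of_forall_le_add {P Q : Measure α} {C : ℝ≥0∞}
    (hPQ : ∀ S, MeasurableSet S → P S ≤ Q S + C) (hQP : ∀ S, MeasurableSet S → Q S ≤ P S + C) :
    tvEDist P Q ≤ C :=
  tvEDist_le_iff.2 fun S hS => ⟨hPQ S hS, hQP S hS⟩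

lemma tvEDist_triangle (P Q R : Measure α) : tvEDist P R ≤ tvEDist P Q + tvEDist Q R := by
  have one_sided (P Q R : Measure α) (S : Set α) (hS : MeasurableSet S) :
      P S ≤ R S + (tvEDist P Q + tvEDist Q R) :=
    calc P S ≤ Q S + tvEDist P Q := measure_le_add_tvEDist P Q hS
      _ ≤ R S + tvEDist Q R + tvEDist P Q := by gcongr; exact measure_le_add_tvEDist Q R hS
      _ = R S + (tvEDist P Q + tvEDist Q R) := by ring
  refine tvEDist_le_of_forall_le_add (one_sided P Q R) ?_
  simpa only [tvEDist_comm R Q, tvEDist_comm Q P, add_comm] using one_sided R Q P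

/-- Measures with the total variation distance, which makes the polygon inequality of
pseudoemetric spaces available; not a global instance. -/
noncomputable abbrev tvPseudoEMetricSpace (α : Type*) [MeasurableSpace α] :
    PseudoEMetricSpace (Measure α) where
  edist := tvEDist
  edist_self := tvEDist_self
  edist_comm := tvEDist_comm
  edist_triangle := tvEDist_triangle

lemma ofReal_abs_toReal_sub_toReal {a b : ℝ≥0∞} (ha : a ≠ ∞) (hb : b ≠ ∞) :
    ENNReal.ofReal |a.toReal - b.toReal| = max (a - b) (b - a) := by
  rw [abs_eq_max_neg, neg_sub, ENNReal.ofReal_max, ENNReal.ofReal_sub _ ENNReal.toReal_nonneg,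
    ENNReal.ofReal_sub _ ENNReal.toReal_nonneg, ENNReal.ofReal_toReal ha, ENNReal.ofReal_toReal hb]

lemma bddAbove_range_abs_toReal_sub (P Q : Measure α) [IsFiniteMeasure P] [IsFiniteMeasure Q] :
    BddAbove (Set.range fun S : {S : Set α // MeasurableSet S} =>
      |(P S.1).toReal - (Q S.1).toReal|) := by
  refine ⟨max (P.real .univ) (Q.real .univ), ?_⟩
  rintro _ ⟨S, rfl⟩
  exact abs_sub_le_of_nonneg_of_le
    ENNReal.toReal_nonneg (le_max_of_le_left (measureReal_mono S.1.subset_univ))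
    ENNReal.toReal_nonneg (le_max_of_le_right (measureReal_mono S.1.subset_univ))

lemma ofReal_tvDist (P Q : Measure α) [IsFiniteMeasure P] [IsFiniteMeasure Q] :
    ENNReal.ofReal (tvDist P Q) = tvEDist P Q := by
  have : Nonempty {S : Set α // MeasurableSet S} := ⟨⟨∅, .empty⟩⟩
  rw [tvDist, ENNReal.ofReal_mono.map_ciSup_of_continuousAt ENNReal.continuous_ofReal.continuousAt
    (bddAbove_range_abs_toReal_sub P Q)]
  exact iSup_congr fun S =>
    ofReal_abs_toReal_sub_toReal (measure_ne_top P S.1) (measure_ne_top Q S.1)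

lemma tvEDist_map_le (P Q : Measure α) {f : α → β} (hf : Measurable f) :
    tvEDist (P.map f) (Q.map f) ≤ tvEDist P Q := by
  rw [tvEDist_le_iff]
  intro S hS
  rw [Measure.map_apply hf hS, Measure.map_apply hf hS]
  exact tvEDist_le_iff.1 le_rfl _ (hf hS)

lemma tvEDist_bind_le {μ : Measure α} {κ η : α → Measure β}
    (hκ : AEMeasurable κ μ) (hη : AEMeasurable η μ) :
    tvEDist (μ.bind κ) (μ.bind η) ≤ ∫⁻ x, tvEDist (κ x) (η x) ∂μ := by
  have one_sided {κ η : α → Measure β} (hκ : AEMeasurable κ μ) (hη : AEMeasurable η μ)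
      (S : Set β) (hS : MeasurableSet S) :
      μ.bind κ S ≤ μ.bind η S + ∫⁻ x, tvEDist (κ x) (η x) ∂μ := by
    have hηS : AEMeasurable (fun x => η x S) μ := (Measure.measurable_coe hS).comp_aemeasurable hη
    rw [Measure.bind_apply hS hκ, Measure.bind_apply hS hη, ← lintegral_add_left' hηS]
    exact lintegral_mono fun x => measure_le_add_tvEDist (κ x) (η x) hS
  refine tvEDist_le_of_forall_le_add (one_sided hκ hη) ?_
  simpa only [tvEDist_comm] using one_sided hη hκ

lemma edist_le_mul_abs_sub {X : Type*} [PseudoEMetricSpace X] {u : ℕ → X} {C : ℝ≥0∞}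
    (hu : ∀ n, edist (u (n + 1)) (u n) ≤ C) (m n : ℕ) :
    edist (u m) (u n) ≤ C * ENNReal.ofReal |(n : ℝ) - m| := by
  wlog hmn : m ≤ n generalizing m n
  · rw [edist_comm, abs_sub_comm]
    exact this n m (le_of_not_ge hmn)
  calc edist (u m) (u n) ≤ ∑ _k ∈ Finset.Ico m n, C :=
        edist_le_Ico_sum_of_edist_le hmn fun {k} _ _ => edist_comm (u k) _ ▸ hu k
    _ = C * ENNReal.ofReal |(n : ℝ) - m| := by
        rw [Finset.sum_const, Nat.card_Ico, nsmul_eq_mul, mul_comm, ← Nat.cast_sub hmn,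
          Nat.abs_cast, ENNReal.ofReal_natCast]

end TotalVariation

section Mixture

variable {α ι Θ : Type*} [MeasurableSpace α] [MeasurableSpace Θ]

/-- The mixture of the measures `μ k` with weights `p k`. For `p k = p(n = k | n_dp = n₀)` and
`μ k = p(s | θ, n = k)` it is `p(s | θ, n_dp = n₀)`. -/
noncomputable def mixture (p : ι → ℝ≥0∞) (μ : ι → Measure α) : Measure α :=
  Measure.sum fun k => p k • μ k

lemma mixture_apply (p : ι → ℝ≥0∞) (μ : ι → Measure α) {S : Set α} (hS : MeasurableSet S) :
    mixture p μ S = ∑' k, p k * μ k S := by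
  simp only [mixture, Measure.sum_apply _ hS, Measure.smul_apply, smul_eq_mul]

lemma mixture_const {p : ι → ℝ≥0∞} (hp : ∑' k, p k = 1) (P : Measure α) :
    mixture p (fun _ => P) = P := by
  ext S hS
  rw [mixture_apply p _ hS, ENNReal.tsum_mul_right, hp, one_mul]

lemma isProbabilityMeasure_mixture {p : ι → ℝ≥0∞} (hp : ∑' k, p k = 1) (μ : ι → Measure α)
    [∀ k, IsProbabilityMeasure (μ k)] : IsProbabilityMeasure (mixture p μ) := by
  constructor
  simp only [mixture_apply p μ .univ, measure_univ, mul_one, hp]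

lemma measurable_mixture [Countable ι] (p : ι → ℝ≥0∞) {κ : ι → Θ → Measure α}
    (hκ : ∀ k, Measurable (κ k)) : Measurable fun t => mixture p fun k => κ k t := by
  refine Measure.measurable_of_measurable_coe _ fun S hS => ?_
  simp only [mixture_apply p _ hS]
  exact Measurable.tsum fun k => ((Measure.measurable_coe hS).comp (hκ k)).const_mul _

lemma tvEDist_mixture_le (p : ι → ℝ≥0∞) (μ ν : ι → Measure α) :
    tvEDist (mixture p μ) (mixture p ν) ≤ ∑' k, p k * tvEDist (μ k) (ν k) := by
  have one_sided (μ ν : ι → Measure α) (S : Set α) (hS : MeasurableSet S) :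
      mixture p μ S ≤ mixture p ν S + ∑' k, p k * tvEDist (μ k) (ν k) := by
    rw [mixture_apply p μ hS, mixture_apply p ν hS, ← ENNReal.tsum_add]
    simp only [← mul_add]
    gcongr with k
    exact measure_le_add_tvEDist (μ k) (ν k) hS
  refine tvEDist_le_of_forall_le_add (one_sided μ ν) ?_
  simpa only [tvEDist_comm] using one_sided ν μ

lemma tvEDist_mixture_right_le {p : ι → ℝ≥0∞} (hp : ∑' k, p k = 1) (P : Measure α)
    (μ : ι → Measure α) : tvEDist P (mixture p μ) ≤ ∑' k, p k * tvEDist P (μ k) := by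
  simpa only [mixture_const hp] using tvEDist_mixture_le p (fun _ => P) μ

lemma tvEDist_mixture_le_mul_tsum_abs_sub {p : ℕ → ℝ≥0∞} (hp : ∑' k, p k = 1)
    {μ : ℕ → Measure α} {C : ℝ≥0∞} (hμ : ∀ n, tvEDist (μ (n + 1)) (μ n) ≤ C) (n₀ : ℕ) :
    tvEDist (μ n₀) (mixture p μ) ≤ C * ∑' k, p k * ENNReal.ofReal |(k : ℝ) - n₀| := by
  let _ := tvPseudoEMetricSpace α
  calc tvEDist (μ n₀) (mixture p μ) ≤ ∑' k, p k * tvEDist (μ n₀) (μ k) :=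
        tvEDist_mixture_right_le hp (μ n₀) μ
    _ ≤ ∑' k, p k * (C * ENNReal.ofReal |(k : ℝ) - n₀|) := by
        gcongr with k
        exact edist_le_mul_abs_sub (u := μ) hμ n₀ k
    _ = C * ∑' k, p k * ENNReal.ofReal |(k : ℝ) - n₀| := by
        simp only [mul_left_comm, ENNReal.tsum_mul_left]

end Mixture

section JointLaw

open ProbabilityTheory

variable {Θ E : Type*} [MeasurableSpace Θ] [MeasurableSpace E]

/-- The law of `(s, θ)` when `θ` has law `π` and `s` has law `κ θ` given `θ`. -/
noncomputable def jointLaw (π : Measure Θ) (κ : Θ → Measure E) : Measure (E × Θ) :=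
  π.bind fun t => (κ t).map fun s => (s, t)

lemma measurable_map_prodMk (κ : Kernel Θ E) [IsSFiniteKernel κ] :
    Measurable fun t => (κ t).map fun s => (s, t) := by
  convert (κ.prod Kernel.id).measurable using 2 with t
  rw [Kernel.prod_apply, Kernel.id_apply, Measure.prod_dirac]

lemma isProbabilityMeasure_jointLaw (π : Measure Θ) [IsProbabilityMeasure π]
    (κ : Kernel Θ E) [IsMarkovKernel κ] : IsProbabilityMeasure (jointLaw π κ) :=
  isProbabilityMeasure_bind (measurable_map_prodMk κ).aemeasurable <|
    ae_of_all _ fun _ => Measure.isProbabilityMeasure_map (by fun_prop)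

lemma tvEDist_jointLaw_le (π : Measure Θ) (κ η : Kernel Θ E)
    [IsSFiniteKernel κ] [IsSFiniteKernel η] :
    tvEDist (jointLaw π κ) (jointLaw π η) ≤ ∫⁻ t, tvEDist (κ t) (η t) ∂π :=
  (tvEDist_bind_le (measurable_map_prodMk κ).aemeasurable
    (measurable_map_prodMk η).aemeasurable).trans <|
      lintegral_mono fun t => tvEDist_map_le (κ t) (η t) (by fun_prop)

end JointLaw

lemma measurePreserving_removeNth {n : ℕ} {X : Fin (n + 1) → Type*} [∀ j, MeasurableSpace (X j)]
    (μ : (j : Fin (n + 1)) → Measure (X j)) [∀ j, SigmaFinite (μ j)] (i : Fin (n + 1))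
    [IsProbabilityMeasure (μ i)] :
    MeasurePreserving i.removeNth (Measure.pi μ) (Measure.pi fun j => μ (i.succAbove j)) :=
  measurePreserving_snd.comp (measurePreserving_piFinSuccAbove μ i)

lemma bind_comp_of_measurePreserving {α β γ : Type*} [MeasurableSpace α] [MeasurableSpace β]
    [MeasurableSpace γ] {μ : Measure α} {ν : Measure β} {f : α → β}
    (hf : MeasurePreserving f μ ν) {κ : β → Measure γ} (hκ : Measurable κ) :
    μ.bind (κ ∘ f) = ν.bind κ := by
  rw [Measure.bind, Measure.bind, ← hf.map_eq, Measure.map_map hκ hf.measurable]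

section SummaryLaw

variable {𝒳 E : Type*} [MeasurableSpace 𝒳] [MeasurableSpace E]

/-- The law `p(s | θ, n)` of the privatized summary of `n` i.i.d. records with law `q`, under the
mechanism `M`. -/
noncomputable def summaryLaw (M : (n : ℕ) → (Fin n → 𝒳) → Measure E) (q : Measure 𝒳) (n : ℕ) :
    Measure E :=
  (Measure.pi fun _ : Fin n => q).bind (M n)

lemma isProbabilityMeasure_summaryLaw {M : (n : ℕ) → (Fin n → 𝒳) → Measure E} {n : ℕ}
    [∀ x, IsProbabilityMeasure (M n x)] (hMmeas : Measurable (M n))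
    (q : Measure 𝒳) [IsProbabilityMeasure q] : IsProbabilityMeasure (summaryLaw M q n) :=
  isProbabilityMeasure_bind hMmeas.aemeasurable (ae_of_all _ inferInstance)

lemma tvEDist_summaryLaw_succ_le {M : (n : ℕ) → (Fin n → 𝒳) → Measure E}
    (hMmeas : ∀ n, Measurable (M n)) {n : ℕ} {i : Fin (n + 1)} {C : ℝ≥0∞}
    (hDP : ∀ x, tvEDist (M (n + 1) x) (M n (x ∘ i.succAbove)) ≤ C)
    (q : Measure 𝒳) [IsProbabilityMeasure q] :
    tvEDist (summaryLaw M q (n + 1)) (summaryLaw M q n) ≤ C := by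
  have hremove := measurePreserving_removeNth (fun _ : Fin (n + 1) => q) i
  have hsummary : summaryLaw M q n =
      (Measure.pi fun _ : Fin (n + 1) => q).bind (M n ∘ i.removeNth) :=
    (bind_comp_of_measurePreserving hremove (hMmeas n)).symm
  rw [hsummary]
  calc tvEDist (summaryLaw M q (n + 1)) _
      ≤ ∫⁻ x, tvEDist (M (n + 1) x) (M n (x ∘ i.succAbove)) ∂Measure.pi fun _ => q :=
        tvEDist_bind_le (hMmeas _).aemeasurable
          ((hMmeas n).comp hremove.measurable).aemeasurable
    _ ≤ ∫⁻ _, C ∂Measure.pi fun _ : Fin (n + 1) => q := lintegral_mono hDP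
    _ = C := by rw [lintegral_const, measure_univ, mul_one]

end SummaryLaw

theorem statement5_general {𝒳 Θ E : Type*} [MeasurableSpace 𝒳] [MeasurableSpace Θ]
    [MeasurableSpace E] (M : (n : ℕ) → (Fin n → 𝒳) → Measure E)
    [∀ n x, IsProbabilityMeasure (M n x)] (hMmeas : ∀ n, Measurable (M n))
    {δ : ℝ} {i : (n : ℕ) → Fin (n + 1)}
    (hDP : ∀ n x, tvDist (M (n + 1) x) (M n (x ∘ (i n).succAbove)) ≤ δ)
    (Q : Θ → Measure 𝒳) [∀ θ, IsProbabilityMeasure (Q θ)]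
    (hmargmeas : ∀ n, Measurable fun θ => summaryLaw M (Q θ) n)
    {p : ℕ → ℝ≥0∞} (hp : ∑' k, p k = 1)
    (π : Measure Θ) [IsProbabilityMeasure π] (θ : Θ) (n₀ : ℕ) :
    ENNReal.ofReal (tvDist (summaryLaw M (Q θ) n₀) (mixture p (summaryLaw M (Q θ))))
      ≤ ENNReal.ofReal δ * ∑' k : ℕ, p k * ENNReal.ofReal |(k : ℝ) - n₀|
    ∧ ENNReal.ofReal (tvDist (jointLaw π fun θ' => summaryLaw M (Q θ') n₀)
        (jointLaw π fun θ' => mixture p (summaryLaw M (Q θ'))))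
      ≤ ENNReal.ofReal δ * ∑' k : ℕ, p k * ENNReal.ofReal |(k : ℝ) - n₀| := by
  have hsummary θ' n := isProbabilityMeasure_summaryLaw (hMmeas n) (Q θ')
  have hmixture θ' := isProbabilityMeasure_mixture hp (summaryLaw M (Q θ'))
  let κ : ProbabilityTheory.Kernel Θ E := ⟨_, hmargmeas n₀⟩
  let η : ProbabilityTheory.Kernel Θ E := ⟨_, measurable_mixture p hmargmeas⟩
  have : ProbabilityTheory.IsMarkovKernel κ := ⟨(hsummary · n₀)⟩
  have : ProbabilityTheory.IsMarkovKernel η := ⟨hmixture⟩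
  have hDP' n x : tvEDist (M (n + 1) x) (M n (x ∘ (i n).succAbove)) ≤ ENNReal.ofReal δ := by
    rw [← ofReal_tvDist]
    exact ENNReal.ofReal_le_ofReal (hDP n x)
  have hbound θ' := tvEDist_mixture_le_mul_tsum_abs_sub hp
    (fun n => tvEDist_summaryLaw_succ_le hMmeas (hDP' n) (Q θ')) n₀
  refine ⟨(ofReal_tvDist _ _).trans_le (hbound θ), ?_⟩
  have := isProbabilityMeasure_jointLaw π κ
  have := isProbabilityMeasure_jointLaw π η
  calc ENNReal.ofReal (tvDist (jointLaw π κ) (jointLaw π η))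
      = tvEDist (jointLaw π κ) (jointLaw π η) := ofReal_tvDist _ _
    _ ≤ ∫⁻ θ', tvEDist (κ θ') (η θ') ∂π := tvEDist_jointLaw_le π κ η
    _ ≤ ∫⁻ _, ENNReal.ofReal δ * ∑' k : ℕ, p k * ENNReal.ofReal |(k : ℝ) - n₀| ∂π :=
        lintegral_mono hbound
    _ = ENNReal.ofReal δ * ∑' k : ℕ, p k * ENNReal.ofReal |(k : ℝ) - n₀| := by
        rw [lintegral_const, measure_univ, mul_one]

/-- Theorem 4.2: if `p(s|x)` is a `(0,δ)`-DP mechanism (TV distance at most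
`δ` on datasets differing by addition/removal of one record), `p(x|θ,n)` is the law of
`n` i.i.d. records, and `p(n|n_dp)` is a proper posterior, then
`TV(p(s | θ, n = n0), p(s | θ, n_dp = n0)) ≤ δ · E_{n | n_dp = n0} |n − n0|`, and with a
proper prior on `θ`, `TV(p(s, θ | n = n0), p(s, θ | n_dp = n0))` satisfies the same
bound. -/
theorem statement5 {𝒳 Θ : Type*} [MeasurableSpace 𝒳] [MeasurableSpace Θ] {d : ℕ}
    -- the privacy mechanism, acting on datasets of each size n
    (M : (n : ℕ) → (Fin n → 𝒳) → Measure (Fin d → ℝ))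
    (hM : ∀ n x, IsProbabilityMeasure (M n x))
    (hMmeas : ∀ n, Measurable (M n))
    (δ : ℝ) (hδ : 0 ≤ δ)
    -- (0,δ)-DP: removing any one record moves the output law by at most δ in TV
    (hDP : ∀ n (x : Fin (n + 1) → 𝒳) (i : Fin (n + 1)),
      tvDist (M (n + 1) x) (M n (x ∘ i.succAbove)) ≤ δ)
    -- per-record data distribution
    (Q : Θ → Measure 𝒳) (hQ : ∀ θ, IsProbabilityMeasure (Q θ))
    (hmargmeas : ∀ n : ℕ, Measurable fun θ => (Measure.pi fun _ : Fin n => Q θ).bind (M n))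
    -- proper posterior `p(n = k | n_dp = n0)`, supported on k ≥ 1
    (post : ℕ → ℕ → ℝ≥0∞)
    (hpost0 : ∀ n0, post n0 0 = 0) (hpost1 : ∀ n0, ∑' k, post n0 k = 1)
    -- proper prior on θ
    (π : Measure Θ) (hπ : IsProbabilityMeasure π)
    (θ : Θ) (n0 : ℕ) :
    ENNReal.ofReal (tvDist
        ((Measure.pi fun _ : Fin n0 => Q θ).bind (M n0))
        (Measure.sum fun k => post n0 k • (Measure.pi fun _ : Fin k => Q θ).bind (M k)))
      ≤ ENNReal.ofReal δ * ∑' k : ℕ, post n0 k * ENNReal.ofReal |(k : ℝ) - (n0 : ℝ)|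
    ∧ ENNReal.ofReal (tvDist
        (π.bind fun θ' =>
          (((Measure.pi fun _ : Fin n0 => Q θ').bind (M n0)).map fun s => (s, θ')))
        (π.bind fun θ' =>
          ((Measure.sum fun k =>
            post n0 k • (Measure.pi fun _ : Fin k => Q θ').bind (M k)).map fun s => (s, θ'))))
      ≤ ENNReal.ofReal δ * ∑' k : ℕ, post n0 k * ENNReal.ofReal |(k : ℝ) - (n0 : ℝ)| :=
  statement5_general M hMmeas (i := fun _ => 0) (fun n x => hDP n x 0) Q hmargmeas (hpost1 n0)
    π θ n0
end

section
/- Suppose the summary mechanism p(s|x) satisfies ε_s-DP and the sample-size mechanism p(n_dp|n) satisfies ε_n-DP, both in the unbounded (add/remove one record) sense. Then in the reversible jump MCMC sampler: (1) the within-model acceptance probability min{1, p(s|x*)/p(s|x)}, where x* is obtained from x by replacing one record, is lower bounded by exp(−2ε_s); and (2) if p(n) is a flat (improper) prior, the between-models acceptance probability min{1, [p(n*) p(s|x*) p(n_dp|n*) q(n|n*)] / [p(n) p(s|x) p(n_dp|n) q(n*|n)]}, where x* is obtained from x by adding or deleting one record and |n* − n| = 1, is lower bounded by exp(−(ε_s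 + ε_n)) for all n ≥ 2, and by (1/2)·exp(−(ε_s + ε_n)) when n = 1 and n* = 2. -/
open MeasureTheory Filter Topology

/-- The between-models proposal pmf of the reversible jump MCMC:
`q(n* | n) = 1` if `n = 1, n* = 2`; `1/2` if `n > 1` and `|n* − n| = 1`; `0` otherwise. -/
noncomputable def qprop (n n' : ℕ) : ℝ :=
  if n = 1 ∧ n' = 2 then 1
  else if 1 < n ∧ (n' = n + 1 ∨ n = n' + 1) then 1 / 2
  else 0

/-!
Privacy bounds the ratio of likelihood terms at neighbouring databases from both sides, and these
two-sided bounds compose: replacing a record is a removal followed by an addition, so it costs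
`2 * εs`, while a between-models move changes both the summary and the sample-size term and so
costs `εs + εn`. What remains of the between-models ratio is the prior ratio, which is `1` for a
flat prior, and the proposal ratio, which drops below `1` only in the move from `n = 1` to `2`.
-/

/-- Two likelihood values `a` and `b` are `ε`-indistinguishable if each is at most `exp ε` times
the other: the condition that differential privacy imposes on the densities of an output at
neighbouring databases. It is stated without division, so no positivity is built in. -/
def Indistinguishable (ε a b : ℝ) : Prop :=
  a ≤ Real.exp ε * b ∧ b ≤ Real.exp ε * a

namespace Indistinguishable

variable {ε δ a b c d r : ℝ}

theorem symm (h : Indistinguishable ε a b) : Indistinguishable ε b a :=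
  And.symm h

theorem trans (hab : Indistinguishable ε a b) (hbc : Indistinguishable δ b c) :
    Indistinguishable (ε + δ) a c := by
  constructor
  · calc a ≤ Real.exp ε * b := hab.1
      _ ≤ Real.exp ε * (Real.exp δ * c) := by gcongr; exact hbc.1
      _ = Real.exp (ε + δ) * c := by rw [Real.exp_add, mul_assoc]
  · calc c ≤ Real.exp δ * b := hbc.2
      _ ≤ Real.exp δ * (Real.exp ε * a) := by gcongr; exact hab.2
      _ = Real.exp (ε + δ) * a := by rw [Real.exp_add]; ring

theorem nonneg_right (h : Indistinguishable ε a b) (ha : 0 ≤ a) : 0 ≤ b :=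
  nonneg_of_mul_nonneg_right (ha.trans h.1) (Real.exp_pos ε)

theorem mul (hab : Indistinguishable ε a b) (hcd : Indistinguishable δ c d) (ha : 0 ≤ a)
    (hc : 0 ≤ c) : Indistinguishable (ε + δ) (a * c) (b * d) := by
  have hb : 0 ≤ b := hab.nonneg_right ha
  have hd : 0 ≤ d := hcd.nonneg_right hc
  rw [Indistinguishable, Real.exp_add, mul_mul_mul_comm _ _ b d,
    mul_mul_mul_comm _ _ a c]
  exact ⟨mul_le_mul hab.1 hcd.1 hc (by positivity), mul_le_mul hab.2 hcd.2 hd (by positivity)⟩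

theorem epsilon_nonneg (h : Indistinguishable ε a b) (ha : 0 < a) : 0 ≤ ε := by
  have hself : a ≤ Real.exp (ε + ε) * a := (h.trans h.symm).1
  have hexp : 1 ≤ Real.exp (ε + ε) := (le_mul_iff_one_le_left ha).1 hself
  linarith [Real.one_le_exp_iff.1 hexp]

theorem exp_neg_le_div (h : Indistinguishable ε a b) (hb : 0 < b) : Real.exp (-ε) ≤ a / b := by
  rw [le_div_iff₀ hb, Real.exp_neg, inv_mul_le_iff₀ (Real.exp_pos ε)]
  exact h.2

theorem exp_neg_le_one (h : Indistinguishable ε a b) (hb : 0 < b) : Real.exp (-ε) ≤ 1 :=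
  Real.exp_le_one_iff.2 (neg_nonpos.2 (h.symm.epsilon_nonneg hb))

theorem exp_neg_le_min_one_div (h : Indistinguishable ε a b) (hb : 0 < b) :
    Real.exp (-ε) ≤ min 1 (a / b) :=
  le_min (h.exp_neg_le_one hb) (h.exp_neg_le_div hb)

theorem min_one_mul_exp_neg_le (h : Indistinguishable ε a b) (hb : 0 < b) (hr : 0 ≤ r) :
    min 1 r * Real.exp (-ε) ≤ min 1 (r * (a / b)) := by
  refine le_min ?_ ?_
  · exact mul_le_one₀ (min_le_left 1 r) (Real.exp_nonneg _) (h.exp_neg_le_one hb)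
  · exact mul_le_mul (min_le_right 1 r) (h.exp_neg_le_div hb) (Real.exp_nonneg _) hr

theorem min_one_mul_exp_neg_le_acceptance {prior prior' q q' : ℝ}
    (hab : Indistinguishable ε a b) (hcd : Indistinguishable δ c d) (hb : 0 < b) (hd : 0 < d)
    (hr : 0 ≤ prior' * q' / (prior * q)) :
    min 1 (prior' * q' / (prior * q)) * Real.exp (-(ε + δ)) ≤
      min 1 ((prior' * a * c * q') / (prior * b * d * q)) := by
  have hprod : Indistinguishable (ε + δ) (a * c) (b * d) :=
    hab.mul hcd (hab.symm.nonneg_right hb.le) (hcd.symm.nonneg_right hd.le)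
  have hsplit : (prior' * a * c * q') / (prior * b * d * q) =
      prior' * q' / (prior * q) * (a * c / (b * d)) := by
    rw [div_mul_div_comm]
    congr 1 <;> ring
  rw [hsplit]
  exact hprod.min_one_mul_exp_neg_le (mul_pos hb hd) hr

end Indistinguishable

/-- `ε`-differential privacy, in the unbounded (add/remove one record) sense, of a mechanism
observed at a fixed output: `f n x` is the density of that output given the database `x` of
size `n`. -/
def IsUnboundedDP {𝒳 : Type*} (ε : ℝ) (f : (n : ℕ) → (Fin n → 𝒳) → ℝ) : Prop :=
  ∀ n (x : Fin (n + 1) → 𝒳) (i : Fin (n + 1)),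
    Indistinguishable ε (f (n + 1) x) (f n (x ∘ i.succAbove))

namespace IsUnboundedDP

variable {𝒳 : Type*} {ε : ℝ} {f : (n : ℕ) → (Fin n → 𝒳) → ℝ} {n : ℕ}

theorem comp_castSucc (hf : IsUnboundedDP ε f) (x : Fin (n + 1) → 𝒳) :
    Indistinguishable ε (f (n + 1) x) (f n (x ∘ Fin.castSucc)) := by
  simpa only [Fin.succAbove_last] using hf n x (Fin.last n)

theorem snoc (hf : IsUnboundedDP ε f) (x : Fin n → 𝒳) (v : 𝒳) :
    Indistinguishable ε (f (n + 1) (Fin.snoc x v)) (f n x) := by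
  simpa only [Fin.snoc_comp_castSucc] using hf.comp_castSucc (Fin.snoc x v)

theorem update (hf : IsUnboundedDP ε f) (x : Fin n → 𝒳) (i : Fin n) (v : 𝒳) :
    Indistinguishable (2 * ε) (f n (Function.update x i v)) (f n x) := by
  obtain _ | n := n
  · exact i.elim0
  have hremove : Function.update x i v ∘ i.succAbove = x ∘ i.succAbove :=
    Function.update_comp_eq_of_forall_ne x v i.succAbove_ne
  have hupdate := hf n (Function.update x i v) i
  rw [hremove] at hupdate
  rw [two_mul]
  exact hupdate.trans (hf n x i).symm

end IsUnboundedDP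

section Proposal

variable {n : ℕ}

theorem qprop_nonneg (n m : ℕ) : 0 ≤ qprop n m := by
  unfold qprop
  split_ifs <;> norm_num

theorem qprop_one_two : qprop 1 2 = 1 :=
  if_pos ⟨rfl, rfl⟩

theorem qprop_succ_self (hn : 1 ≤ n) : qprop (n + 1) n = 1 / 2 := by
  rw [qprop, if_neg (by lia), if_pos (by lia)]

theorem qprop_self_succ (hn : 2 ≤ n) : qprop n (n + 1) = 1 / 2 := by
  rw [qprop, if_neg (by lia), if_pos (by lia)]

theorem min_one_qprop_add_ratio (hn : 2 ≤ n) :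
    min 1 (qprop (n + 1) n / qprop n (n + 1)) = 1 := by
  rw [qprop_succ_self (by lia), qprop_self_succ hn, div_self (by norm_num), min_self]

theorem min_one_qprop_delete_ratio (hn : 1 ≤ n) :
    min 1 (qprop n (n + 1) / qprop (n + 1) n) = 1 := by
  rw [qprop_succ_self hn]
  obtain rfl | hn : 1 = n ∨ 2 ≤ n := hn.eq_or_lt
  · norm_num [qprop_one_two]
  · norm_num [qprop_self_succ hn]

theorem min_one_qprop_two_one_ratio : min 1 (qprop 2 1 / qprop 1 2) = 1 / 2 := by
  norm_num [qprop_one_two, qprop_succ_self]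

end Proposal

/-- Proposition 5.1, lower bounds on the RJMCMC acceptance probabilities:
if the density `f` of the summary mechanism satisfies `ε_s`-DP and the density `pn` of
the sample-size mechanism satisfies `ε_n`-DP (both in the unbounded, add/remove-one
sense), then (1) the within-model acceptance probability (replacing one record) is at
least `exp(−2 ε_s)`, and (2) with a flat prior on `n`, the between-models acceptance
probability is at least `exp(−(ε_s + ε_n))` for all current `n ≥ 2` (for both the add
and the delete move), and at least `(1/2)·exp(−(ε_s + ε_n))` when `n = 1` and
`n* = 2`. -/
theorem statement8 {𝒳 : Type*}
    -- `f n x` is the density of the observed summary `s` given the database `x` of size n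
    (f : (n : ℕ) → (Fin n → 𝒳) → ℝ)
    (hfpos : ∀ n x, 0 < f n x)
    (εs εn : ℝ)
    -- `ε_s`-DP for the summary mechanism, unbounded (add/remove one record) sense
    (hfDP : ∀ n (x : Fin (n + 1) → 𝒳) (i : Fin (n + 1)),
      f (n + 1) x ≤ Real.exp εs * f n (x ∘ i.succAbove) ∧
      f n (x ∘ i.succAbove) ≤ Real.exp εs * f (n + 1) x)
    -- `pn n` is the density of the observed `n_dp` given sample size n
    (pn : ℕ → ℝ) (hpnpos : ∀ n, 0 < pn n)
    -- `ε_n`-DP for the sample-size mechanism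
    (hpnDP : ∀ n : ℕ, pn (n + 1) ≤ Real.exp εn * pn n ∧ pn n ≤ Real.exp εn * pn (n + 1))
    -- flat (improper) prior on n
    (prior : ℕ → ℝ) (hpriorpos : ∀ n, 0 < prior n) (hflat : ∀ n m, prior n = prior m) :
    -- (1) within-model move: replace one record
    (∀ n (x : Fin n → 𝒳) (i : Fin n) (v : 𝒳),
      Real.exp (-(2 * εs)) ≤ min 1 (f n (Function.update x i v) / f n x))
    -- (2) between-models, add move from n ≥ 2 to n + 1
    ∧ (∀ n (x : Fin n → 𝒳) (v : 𝒳), 2 ≤ n →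
        Real.exp (-(εs + εn)) ≤ min 1
          ((prior (n + 1) * f (n + 1) (Fin.snoc x v) * pn (n + 1) * qprop (n + 1) n) /
            (prior n * f n x * pn n * qprop n (n + 1))))
    -- (2) between-models, delete move from n ≥ 2 to n − 1
    ∧ (∀ n (x : Fin (n + 1) → 𝒳), 2 ≤ n + 1 →
        Real.exp (-(εs + εn)) ≤ min 1
          ((prior n * f n (x ∘ Fin.castSucc) * pn n * qprop n (n + 1)) /
            (prior (n + 1) * f (n + 1) x * pn (n + 1) * qprop (n + 1) n)))
    -- (2) between-models, add move from n = 1 to n* = 2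
    ∧ (∀ (x : Fin 1 → 𝒳) (v : 𝒳),
        (1 / 2) * Real.exp (-(εs + εn)) ≤ min 1
          ((prior 2 * f 2 (Fin.snoc x v) * pn 2 * qprop 2 1) /
            (prior 1 * f 1 x * pn 1 * qprop 1 2))) := by
  have hs : IsUnboundedDP εs f := hfDP
  have hn : ∀ n, Indistinguishable εn (pn (n + 1)) (pn n) := hpnDP
  have flat_ratio (n m : ℕ) (q q' : ℝ) : prior n * q' / (prior m * q) = q' / q := by
    rw [hflat n m, mul_div_mul_left _ _ (hpriorpos m).ne']
  have ratio_nonneg (n m : ℕ) : 0 ≤ prior m * qprop m n / (prior n * qprop n m) := by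
    rw [flat_ratio]
    exact div_nonneg (qprop_nonneg m n) (qprop_nonneg n m)
  have add_move (n : ℕ) (x : Fin n → 𝒳) (v : 𝒳) :=
    (hs.snoc x v).min_one_mul_exp_neg_le_acceptance (hn n) (hfpos n x) (hpnpos n)
      (ratio_nonneg n (n + 1))
  have delete_move (n : ℕ) (x : Fin (n + 1) → 𝒳) :=
    (hs.comp_castSucc x).symm.min_one_mul_exp_neg_le_acceptance (hn n).symm (hfpos _ x)
      (hpnpos _) (ratio_nonneg (n + 1) n)
  refine ⟨fun n x i v => ?_, fun n x v h => ?_, fun n x h => ?_, fun x v => ?_⟩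
  · exact (hs.update x i v).exp_neg_le_min_one_div (hfpos n x)
  · simpa only [flat_ratio, min_one_qprop_add_ratio h, one_mul] using add_move n x v
  · simpa only [flat_ratio, min_one_qprop_delete_ratio (Nat.le_of_succ_le_succ h), one_mul]
      using delete_move n x
  · simpa only [flat_ratio, Nat.reduceAdd, min_one_qprop_two_one_ratio] using add_move 1 x v
end

section
/- Let p(n) be a flat (improper) prior on {1,2,...}. Suppose the privacy mechanism η(n_dp | n) := p(n_dp | n) is a pmf with n ∈ ℕ and n_dp ∈ ℤ that is symmetric, i.e. η(n1 | n2) = η(n2 | n1) for all n1, n2 ∈ ℕ. If, for n0 ∈ ℕ, (n_dp − n0 | n = n0) = O_p(a_{n0}) where a_{n0} = o(n0), then also (n − n0 | n_dp = n0) = O_p(a_{n0}), where the posterior is p(n = k | n_dp = n0) = η(k | n0) / Σ_{i=1}^∞ η(i | n0). -/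
open MeasureTheory Filter Topology Asymptotics
open scoped ENNReal

/-!
By symmetry, the posterior given `n0` is the law `η n0` conditioned on the positive integers.
Nonpositive integers are at distance at least `n0` from `n0`, so they lie in the tail
`{m | M * aseq n0 < |m - n0|}` once `M * aseq n0 < n0`, which holds eventually as
`aseq n0 = o(n0)`. If that tail has mass `b`, then the positive integers have mass at least
`1 - b`, so the conditional mass of the tail is at most `b / (1 - b)`, which
is smaller than `γ` once `b < γ / (1 + γ)`.
-/

/-- The posterior probability of `S` under the flat prior on `{1, 2, ...}`, where `w k` is the
likelihood of the observation when the parameter is `k`. -/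
noncomputable def flatPosterior (w : ℕ → ℝ≥0∞) (S : Set ℕ) : ℝ≥0∞ :=
  (∑' k : ↥(Set.Ici 1 ∩ S), w k) / ∑' i : Set.Ici 1, w i

theorem tsum_inter_div_tsum_le {α : Type*} {f : α → ℝ≥0∞} {s t : Set α}
    (hf : 1 ≤ ∑' a, f a) (hst : s ∪ t = Set.univ) :
    (∑' a : ↥(s ∩ t), f a) / ∑' a : s, f a ≤ (∑' a : t, f a) / (1 - ∑' a : t, f a) := by
  have mass_s : 1 - ∑' a : t, f a ≤ ∑' a : s, f a := by
    rw [tsub_le_iff_right]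
    calc 1 ≤ ∑' a : ↥(s ∪ t), f a := by rwa [hst, tsum_univ]
      _ ≤ (∑' a : s, f a) + ∑' a : t, f a := ENNReal.tsum_union_le f s t
  exact ENNReal.div_le_div (ENNReal.tsum_mono_subtype f Set.inter_subset_right) mass_s

theorem div_one_sub_lt_ofReal {b : ℝ≥0∞} {γ : ℝ} (hγ : 0 < γ)
    (hb : b < ENNReal.ofReal (γ / (1 + γ))) : b / (1 - b) < ENNReal.ofReal γ := by
  have inv_le : (ENNReal.ofReal (1 + γ))⁻¹ ≤ 1 - b :=
    calc (ENNReal.ofReal (1 + γ))⁻¹ = ENNReal.ofReal (1 - γ / (1 + γ)) := by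
          rw [← ENNReal.ofReal_inv_of_pos (by positivity)]
          congr 1
          field_simp
          ring
      _ = 1 - ENNReal.ofReal (γ / (1 + γ)) := by
          rw [ENNReal.ofReal_sub _ (by positivity), ENNReal.ofReal_one]
      _ ≤ 1 - b := tsub_le_tsub_left hb.le 1
  calc b / (1 - b) ≤ b * ENNReal.ofReal (1 + γ) :=
        mul_le_mul_right (ENNReal.inv_le_iff_inv_le.1 inv_le) b
    _ < ENNReal.ofReal γ := by
        rwa [← ENNReal.lt_div_iff_mul_lt (.inl (ENNReal.ofReal_pos.2 (by positivity)).ne')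
            (.inl ENNReal.ofReal_ne_top),
          ← ENNReal.ofReal_div_of_pos (by positivity)]

theorem flatPosterior_preimage_natCast {w : ℕ → ℝ≥0∞} {f : ℤ → ℝ≥0∞}
    (hwf : ∀ k : ℕ, 1 ≤ k → w k = f k) (A : Set ℤ) :
    flatPosterior w ((↑) ⁻¹' A)
      = (∑' m : ↥(Set.Ici 1 ∩ A), f m) / ∑' m : Set.Ici (1 : ℤ), f m := by
  have tsum_natCast : ∀ s ⊆ Set.Ici 1, ∑' k : s, w k = ∑' m : ((↑) : ℕ → ℤ) '' s, f m :=
    fun s hs => (tsum_congr fun k : s => hwf k (hs k.2)).trans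
      (tsum_image f Nat.cast_injective.injOn).symm
  rw [flatPosterior, tsum_natCast _ Set.inter_subset_left, tsum_natCast _ subset_rfl,
    Set.image_inter_preimage, Nat.image_cast_int_Ici, Nat.cast_one]

theorem Ici_one_union_lt_abs_sub {r x : ℝ} (hr : r < x) :
    Set.Ici (1 : ℤ) ∪ {m : ℤ | r < |(m : ℝ) - x|} = Set.univ := by
  refine Set.eq_univ_of_forall fun m => (le_or_gt 1 m).imp id fun hm => ?_
  have hm0 : (m : ℝ) ≤ 0 := Int.cast_nonpos.2 (Int.lt_add_one_iff.1 hm)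
  calc r < x - m := by linarith
    _ ≤ |(m : ℝ) - x| := by rw [abs_sub_comm]; exact le_abs_self _

/-- Lemma A.1: with a flat prior on `{1,2,...}` and a symmetric pmf
mechanism `η(n_dp | n)` (with `n ∈ ℕ`, `n_dp ∈ ℤ`), if
`(n_dp − n0 | n = n0) = O_p(a_{n0})` with `a_{n0} = o(n0)`, then also
`(n − n0 | n_dp = n0) = O_p(a_{n0})` under the posterior
`p(n = k | n_dp = n0) = η(k | n0) / ∑_{i ≥ 1} η(i | n0)`. -/
theorem statement9
    (η : ℕ → ℤ → ℝ≥0∞)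
    (hη : ∀ n : ℕ, 1 ≤ n → ∑' m : ℤ, η n m = 1)
    (hsymm : ∀ n1 n2 : ℕ, 1 ≤ n1 → 1 ≤ n2 → η n1 (n2 : ℤ) = η n2 (n1 : ℤ))
    (aseq : ℕ → ℝ) (ha : aseq =o[atTop] fun n => (n : ℝ))
    -- `(n_dp − n0 | n = n0) = O_p(aseq n0)`
    (hOp : ∀ γ : ℝ, 0 < γ → ∃ M : ℝ, 0 < M ∧ ∃ N : ℕ, ∀ n0 : ℕ, N ≤ n0 → 1 ≤ n0 →
      (∑' m : {m : ℤ // M * aseq n0 < |(m : ℝ) - (n0 : ℝ)|}, η n0 m.1)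
        < ENNReal.ofReal γ) :
    -- `(n − n0 | n_dp = n0) = O_p(aseq n0)`
    ∀ γ : ℝ, 0 < γ → ∃ M : ℝ, 0 < M ∧ ∃ N : ℕ, ∀ n0 : ℕ, N ≤ n0 → 1 ≤ n0 →
      (∑' k : {k : ℕ // 1 ≤ k ∧ M * aseq n0 < |(k : ℝ) - (n0 : ℝ)|}, η k.1 (n0 : ℤ)) /
        (∑' i : {i : ℕ // 1 ≤ i}, η i.1 (n0 : ℤ)) < ENNReal.ofReal γ := by
  intro γ hγ
  obtain ⟨M, hM, N, tail_lt⟩ := hOp (γ / (1 + γ)) (by positivity)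
  obtain ⟨N', norm_radius_lt⟩ := eventually_atTop.1 <|
    (ha.const_mul_left M).eventuallyLT_norm_of_eventually_pos <|
      (eventually_gt_atTop 0).mono fun n hn => by simpa using hn
  refine ⟨M, hM, max N N', fun n0 hn0 one_le => ?_⟩
  have radius_lt : M * aseq n0 < n0 :=
    (Real.le_norm_self _).trans_lt <|
      (norm_radius_lt n0 (le_of_max_le_right hn0)).trans_eq (Real.norm_natCast n0)
  let tail : Set ℤ := {m | M * aseq n0 < |(m : ℝ) - n0|}
  calc _ = flatPosterior (fun k => η k n0) ((↑) ⁻¹' tail) := rfl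
    _ = (∑' m : ↥(Set.Ici 1 ∩ tail), η n0 m) / ∑' m : Set.Ici (1 : ℤ), η n0 m :=
        flatPosterior_preimage_natCast (fun k hk => hsymm k n0 hk one_le) tail
    _ ≤ (∑' m : tail, η n0 m) / (1 - ∑' m : tail, η n0 m) :=
        tsum_inter_div_tsum_le (hη n0 one_le).ge (Ici_one_union_lt_abs_sub radius_lt)
    _ < ENNReal.ofReal γ :=
        div_one_sub_lt_ofReal hγ (tail_lt n0 (le_of_max_le_left hn0) one_le)
end

section
/- (Multivariate Polya's theorem) If X_n converges in distribution to X in ℝ^d, where X has a continuous cumulative distribution function, then the convergence of the multivariate cdfs is uniform: sup_{t ∈ ℝ^d} |F_{X_n}(t) − F_X(t)| → 0. It follows that KS(law(X_n), law(X)) → 0, where KS is the Kolmogorov–Smirnov distance over axis-aligned rectangles. -/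
open MeasureTheory Filter Topology Asymptotics
open scoped ENNReal

/-!
A class of sets that, for every `ε > 0`, is covered by finitely many brackets `A ⊆ S ⊆ B` with
`ν (B \ A) ≤ ε` and `ν`-null frontiers is a uniformity class for weak convergence to `ν`: the
portmanteau theorem controls the finitely many ends, and monotonicity controls every set in between.

Having such brackets is stable under complements, finite intersections and continuous preimages, so
for rectangles it suffices to bracket the lower sets of `ℝ` under each marginal `ρ` of `ν`. With
`F x = ρ (Iic x)`, every lower set `S` satisfies `{F < ρ S} ⊆ S ⊆ {F ≤ ρ S}`, and rounding `ρ S` to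
multiples of `ε` gives the brackets, because `ρ {a ≤ F ≤ b} ≤ b - a` when `ρ` has no atoms.
Indeed the marginals of `ν` have no atoms: the mass of `{x ≤ t, x i = t i}` is at most the decrease
of the joint cdf when `t i` is lowered to any `s < t i`, and this vanishes as `s` tends to `t i`.
-/

open scoped NNReal

variable {ι α β : Type*}

section Portmanteau

variable [MeasurableSpace α] [TopologicalSpace α] {l : Filter ι} {μ : ι → Measure α}
  {ν : Measure α}

lemma TendstoInDist.tendsto_measureReal_univ (h : TendstoInDist l μ ν) :
    Tendsto (fun i => (μ i).real Set.univ) l (𝓝 (ν.real Set.univ)) := by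
  simpa using h 1

variable [OpensMeasurableSpace α] [HasOuterApproxClosed α] [∀ i, IsFiniteMeasure (μ i)]
  [IsFiniteMeasure ν]

lemma TendstoInDist.eventually_measureReal_lt_of_isClosed (h : TendstoInDist l μ ν) {F : Set α}
    (hF : IsClosed F) {c : ℝ} (hc : ν.real F < c) : ∀ᶠ i in l, (μ i).real F < c := by
  let μ' : ι → FiniteMeasure α := fun i => ⟨μ i, inferInstance⟩
  let ν' : FiniteMeasure α := ⟨ν, inferInstance⟩
  have hlim : Tendsto μ' l (𝓝 ν') := FiniteMeasure.tendsto_iff_forall_integral_tendsto.2 h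
  have hlimsup : l.limsup (fun i => μ i F) < ENNReal.ofReal c :=
    (FiniteMeasure.limsup_measure_closed_le_of_tendsto hlim hF).trans_lt
      ((ENNReal.lt_ofReal_iff_toReal_lt (measure_ne_top ν F)).2 hc)
  filter_upwards [eventually_lt_of_limsup_lt hlimsup] with i hi
  exact (ENNReal.lt_ofReal_iff_toReal_lt (measure_ne_top (μ i) F)).1 hi

lemma TendstoInDist.eventually_lt_measureReal_of_isOpen (h : TendstoInDist l μ ν) {G : Set α}
    (hG : IsOpen G) {c : ℝ} (hc : c < ν.real G) : ∀ᶠ i in l, c < (μ i).real G := by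
  obtain ⟨c', hcc', hc'⟩ := exists_between hc
  have hcompl : ν.real Gᶜ < ν.real Set.univ - c' := by
    linarith [measureReal_add_measureReal_compl (μ := ν) hG.measurableSet]
  have huniv : ν.real Set.univ - c' + c < ν.real Set.univ := by linarith
  filter_upwards [h.eventually_measureReal_lt_of_isClosed hG.isClosed_compl hcompl,
    h.tendsto_measureReal_univ.eventually_const_lt huniv] with i hi hi_univ
  linarith [measureReal_add_measureReal_compl (μ := μ i) hG.measurableSet]

lemma TendstoInDist.tendsto_measureReal_of_null_frontier_s11 (h : TendstoInDist l μ ν) {E : Set α}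
    (hE : ν (frontier E) = 0) : Tendsto (fun i => (μ i).real E) l (𝓝 (ν.real E)) := by
  refine tendsto_order.2 ⟨fun c hc => ?_, fun c hc => ?_⟩
  · rw [← measureReal_congr (interior_ae_eq_of_null_frontier hE)] at hc
    filter_upwards [h.eventually_lt_measureReal_of_isOpen isOpen_interior hc] with i hi
    exact hi.trans_le (measureReal_mono interior_subset)
  · rw [← measureReal_congr (closure_ae_eq_of_null_frontier hE)] at hc
    filter_upwards [h.eventually_measureReal_lt_of_isClosed isClosed_closure hc] with i hi
    exact (measureReal_mono subset_closure).trans_lt hi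

end Portmanteau

section Bracketing

variable [MeasurableSpace α] [TopologicalSpace α] {ν : Measure α}

/-- The pair `(A, B)` is an `ε`-bracket for `ν`: it encloses the sets `S` with `A ⊆ S ⊆ B`, and
`ν (B \ A) ≤ ε`. Both ends are required to have `ν`-null frontier, so that weak convergence to `ν`
controls their measures. The inclusion `A ⊆ B` is not imposed: it holds as soon as some `S` is
enclosed. -/
structure IsBracket (ν : Measure α) (ε : ℝ≥0) (A B : Set α) : Prop where
  null_frontier_left : ν (frontier A) = 0
  null_frontier_right : ν (frontier B) = 0
  measure_sdiff_le : ν (B \ A) ≤ ε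

/-- The class `C` of sets has finite bracketing numbers for `ν`: for every `ε > 0` it is covered
by finitely many `ε`-brackets, encoded as pairs of sets. -/
def HasFiniteBracketing (ν : Measure α) (C : Set (Set α)) : Prop :=
  ∀ ε : ℝ≥0, 0 < ε → ∃ T : Set (Set α × Set α), T.Finite ∧
    (∀ p ∈ T, IsBracket ν ε p.1 p.2) ∧ ∀ S ∈ C, ∃ p ∈ T, S ∈ Set.Icc p.1 p.2

lemma isBracket_univ (ν : Measure α) (ε : ℝ≥0) : IsBracket ν ε Set.univ Set.univ :=
  ⟨by simp, by simp, by simp⟩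

lemma IsBracket.compl {ε : ℝ≥0} {A B : Set α} (h : IsBracket ν ε A B) : IsBracket ν ε Bᶜ Aᶜ where
  null_frontier_left := by simpa only [frontier_compl] using h.null_frontier_right
  null_frontier_right := by simpa only [frontier_compl] using h.null_frontier_left
  measure_sdiff_le := by simpa only [compl_sdiff_compl] using h.measure_sdiff_le

lemma IsBracket.inter {ε δ : ℝ≥0} {A B A' B' : Set α} (h : IsBracket ν ε A B)
    (h' : IsBracket ν δ A' B') : IsBracket ν (ε + δ) (A ∩ A') (B ∩ B') where
  null_frontier_left := null_frontier_inter h.null_frontier_left h'.null_frontier_left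
  null_frontier_right := null_frontier_inter h.null_frontier_right h'.null_frontier_right
  measure_sdiff_le := by
    have hsub : (B ∩ B') \ (A ∩ A') ⊆ B \ A ∪ B' \ A' := by grind
    calc ν ((B ∩ B') \ (A ∩ A')) ≤ ν (B \ A) + ν (B' \ A') :=
          (measure_mono hsub).trans (measure_union_le _ _)
      _ ≤ (ε + δ : ℝ≥0) := by
          rw [ENNReal.coe_add]
          exact add_le_add h.measure_sdiff_le h'.measure_sdiff_le

lemma IsBracket.preimage [MeasurableSpace β] [TopologicalSpace β] {f : α → β} (hf : Continuous f)
    (hfm : AEMeasurable f ν) {ε : ℝ≥0} {A B : Set β} (h : IsBracket (ν.map f) ε A B) :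
    IsBracket ν ε (f ⁻¹' A) (f ⁻¹' B) where
  null_frontier_left := measure_mono_null (hf.frontier_preimage_subset A)
    (Measure.preimage_null_of_map_null hfm h.null_frontier_left)
  null_frontier_right := measure_mono_null (hf.frontier_preimage_subset B)
    (Measure.preimage_null_of_map_null hfm h.null_frontier_right)
  measure_sdiff_le := (Measure.le_map_apply hfm (B \ A)).trans h.measure_sdiff_le

lemma IsBracket.abs_measureReal_sub_lt {μ : Measure α} [IsFiniteMeasure μ] [IsFiniteMeasure ν]
    {ε : ℝ≥0} {A B S : Set α} (h : IsBracket ν ε A B) (hS : S ∈ Set.Icc A B)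
    (hA : |μ.real A - ν.real A| < ε) (hB : |μ.real B - ν.real B| < ε) :
    |μ.real S - ν.real S| < ε + ε := by
  have hdiff : ν.real (B \ A) ≤ ε := ENNReal.toReal_le_coe_of_le_coe h.measure_sdiff_le
  have hAB : ν.real B ≤ ν.real A + ν.real (B \ A) := by
    simpa only [Set.union_sdiff_cancel (hS.1.trans hS.2)] using
      measureReal_union_le (μ := ν) A (B \ A)
  have hμA : μ.real A ≤ μ.real S := measureReal_mono hS.1
  have hμB : μ.real S ≤ μ.real B := measureReal_mono hS.2
  have hνA : ν.real A ≤ ν.real S := measureReal_mono hS.1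
  have hνB : ν.real S ≤ ν.real B := measureReal_mono hS.2
  rw [abs_lt] at hA hB ⊢
  constructor <;> linarith

namespace HasFiniteBracketing

variable {C D : Set (Set α)}

lemma mono (hD : HasFiniteBracketing ν D) (hCD : C ⊆ D) : HasFiniteBracketing ν C := by
  intro ε hε
  obtain ⟨T, hT, hbracket, hcover⟩ := hD ε hε
  exact ⟨T, hT, hbracket, fun S hS => hcover S (hCD hS)⟩

lemma singleton_univ (ν : Measure α) : HasFiniteBracketing ν {Set.univ} := by
  rintro ε -
  refine ⟨{(Set.univ, Set.univ)}, Set.finite_singleton _, ?_, ?_⟩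
  · rintro _ rfl
    exact isBracket_univ ν ε
  · rintro _ rfl
    exact ⟨_, rfl, le_rfl, le_rfl⟩

lemma image_compl (hC : HasFiniteBracketing ν C) : HasFiniteBracketing ν (compl '' C) := by
  intro ε hε
  obtain ⟨T, hT, hbracket, hcover⟩ := hC ε hε
  refine ⟨(fun p => (p.2ᶜ, p.1ᶜ)) '' T, hT.image _, ?_, ?_⟩
  · rintro _ ⟨p, hp, rfl⟩
    exact (hbracket p hp).compl
  · rintro _ ⟨S, hS, rfl⟩
    obtain ⟨p, hp, hpS⟩ := hcover S hS
    exact ⟨_, ⟨p, hp, rfl⟩, compl_le_compl hpS.2, compl_le_compl hpS.1⟩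

lemma image2_inter (hC : HasFiniteBracketing ν C) (hD : HasFiniteBracketing ν D) :
    HasFiniteBracketing ν (Set.image2 (· ∩ ·) C D) := by
  intro ε hε
  obtain ⟨T, hT, hbracket, hcover⟩ := hC (ε / 2) (half_pos hε)
  obtain ⟨T', hT', hbracket', hcover'⟩ := hD (ε / 2) (half_pos hε)
  refine ⟨Set.image2 (fun p q => (p.1 ∩ q.1, p.2 ∩ q.2)) T T', hT.image2 _ hT', ?_, ?_⟩
  · rintro _ ⟨p, hp, q, hq, rfl⟩
    simpa only [add_halves] using (hbracket p hp).inter (hbracket' q hq)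
  · rintro _ ⟨A, hA, B, hB, rfl⟩
    obtain ⟨p, hp, hpA⟩ := hcover A hA
    obtain ⟨q, hq, hqB⟩ := hcover' B hB
    exact ⟨_, ⟨p, hp, q, hq, rfl⟩, Set.inter_subset_inter hpA.1 hqB.1,
      Set.inter_subset_inter hpA.2 hqB.2⟩

lemma image_preimage [MeasurableSpace β] [TopologicalSpace β] {f : α → β} (hf : Continuous f)
    (hfm : AEMeasurable f ν) {C : Set (Set β)} (hC : HasFiniteBracketing (ν.map f) C) :
    HasFiniteBracketing ν (Set.preimage f '' C) := by
  intro ε hε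
  obtain ⟨T, hT, hbracket, hcover⟩ := hC ε hε
  refine ⟨(fun p => (f ⁻¹' p.1, f ⁻¹' p.2)) '' T, hT.image _, ?_, ?_⟩
  · rintro _ ⟨p, hp, rfl⟩
    exact (hbracket p hp).preimage hf hfm
  · rintro _ ⟨S, hS, rfl⟩
    obtain ⟨p, hp, hpS⟩ := hcover S hS
    exact ⟨_, ⟨p, hp, rfl⟩, Set.preimage_mono hpS.1, Set.preimage_mono hpS.2⟩

lemma image_biInter {κ : Type*} {C : κ → Set (Set α)} (s : Finset κ)
    (hC : ∀ k ∈ s, HasFiniteBracketing ν (C k)) :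
    HasFiniteBracketing ν ((fun I : κ → Set α => ⋂ k ∈ s, I k) '' (s : Set κ).pi C) := by
  classical
  induction s using Finset.induction_on with
  | empty =>
    refine (singleton_univ ν).mono ?_
    rintro _ ⟨I, -, rfl⟩
    simp
  | insert a s _ ih =>
    have hs := ih fun k hk => hC k (Finset.mem_insert_of_mem hk)
    refine ((hC a (Finset.mem_insert_self a s)).image2_inter hs).mono ?_
    rintro _ ⟨I, hI, rfl⟩
    rw [Finset.coe_insert, Set.insert_pi] at hI
    exact ⟨I a, hI.1, _, ⟨I, hI.2, rfl⟩, (Finset.set_biInter_insert a s I).symm⟩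

theorem tendstoUniformlyOn_measureReal [OpensMeasurableSpace α] [HasOuterApproxClosed α]
    [IsFiniteMeasure ν] {l : Filter ι} {μ : ι → Measure α} [∀ i, IsFiniteMeasure (μ i)]
    (hC : HasFiniteBracketing ν C) (h : TendstoInDist l μ ν) :
    TendstoUniformlyOn (fun i => (μ i).real) ν.real l C := by
  rw [Metric.tendstoUniformlyOn_iff]
  intro ε hε
  lift ε to ℝ≥0 using hε.le
  have hε2 : 0 < ε / 2 := half_pos hε
  obtain ⟨T, hT, hbracket, hcover⟩ := hC (ε / 2) hε2
  have hends : ∀ᶠ i in l, ∀ p ∈ T, |(μ i).real p.1 - ν.real p.1| < (ε / 2 : ℝ≥0) ∧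
      |(μ i).real p.2 - ν.real p.2| < (ε / 2 : ℝ≥0) := by
    refine (eventually_all_finite hT).2 fun p hp => Eventually.and ?_ ?_
    · exact Metric.tendsto_nhds.1
        (h.tendsto_measureReal_of_null_frontier_s11 (hbracket p hp).null_frontier_left) _ hε2
    · exact Metric.tendsto_nhds.1
        (h.tendsto_measureReal_of_null_frontier_s11 (hbracket p hp).null_frontier_right) _ hε2
  filter_upwards [hends] with i hi S hS
  obtain ⟨p, hp, hpS⟩ := hcover S hS
  rw [dist_comm, Real.dist_eq]
  have hlt := (hbracket p hp).abs_measureReal_sub_lt hpS (hi p hp).1 (hi p hp).2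
  rwa [← NNReal.coe_add, add_halves] at hlt

end HasFiniteBracketing

end Bracketing

section LinearOrder

lemma subsingleton_frontier_of_isLowerSet [LinearOrder α] [TopologicalSpace α] [OrderTopology α]
    {S : Set α} (hS : IsLowerSet S) : (frontier S).Subsingleton := by
  have hle : ∀ x ∈ closure Sᶜ, ∀ y ∈ closure S, y ≤ x := by
    intro x hx y hy
    by_contra! hxy
    obtain ⟨u, v, hu, hv, hxu, hyv, huv⟩ := order_separated hxy
    obtain ⟨z, hzu, hzS⟩ := mem_closure_iff.1 hx u hu hxu
    obtain ⟨w, hwv, hwS⟩ := mem_closure_iff.1 hy v hv hyv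
    exact hzS (hS (huv z hzu w hwv).le hwS)
  rw [frontier_eq_closure_inter_closure]
  exact fun x hx y hy => le_antisymm (hle y hy.2 x hx.1) (hle x hx.2 y hy.1)

variable [LinearOrder α] [MeasurableSpace α] {ρ : Measure α} [IsFiniteMeasure ρ]

lemma monotone_measureReal_Iic : Monotone fun x => ρ.real (Set.Iic x) :=
  fun _ _ hxy => measureReal_mono (Set.Iic_subset_Iic.2 hxy)

lemma mem_Icc_measureReal_Iic_of_isLowerSet {S : Set α} (hS : IsLowerSet S) :
    S ∈ Set.Icc {x | ρ.real (Set.Iic x) < ρ.real S} {x | ρ.real (Set.Iic x) ≤ ρ.real S} := by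
  constructor
  · intro x hx
    by_contra hxS
    exact (measureReal_mono fun y hy => le_of_not_ge fun hxy => hxS (hS hxy hy)).not_gt hx
  · intro x hx
    exact measureReal_mono fun y hy => hS hy hx

variable [TopologicalSpace α] [OrderTopology α] [BorelSpace α] [NullSingletonClass ρ]

lemma measureReal_Icc_eq_sub {x y : α} (hxy : x ≤ y) :
    ρ.real (Set.Icc x y) = ρ.real (Set.Iic y) - ρ.real (Set.Iic x) := by
  rw [← measureReal_congr Ioc_ae_eq_Icc, ← Set.Iic_sdiff_Iic,
    measureReal_sdiff (Set.Iic_subset_Iic.2 hxy) measurableSet_Iic]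

variable [ρ.InnerRegularCompactLTTop]

lemma measure_measureReal_Iic_mem_Icc_le (a b : ℝ) :
    ρ {x | ρ.real (Set.Iic x) ∈ Set.Icc a b} ≤ ENNReal.ofReal (b - a) := by
  have hmeas : MeasurableSet {x | ρ.real (Set.Iic x) ∈ Set.Icc a b} :=
    (Set.ordConnected_Icc.preimage_mono monotone_measureReal_Iic).measurableSet
  -- A compact set lies between its extreme points, where the bounds on `ρ (Iic ·)` apply.
  rw [hmeas.measure_eq_iSup_isCompact_of_ne_top (measure_ne_top ρ _)]
  refine iSup₂_le fun K hK => iSup_le fun hKc => ?_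
  rcases K.eq_empty_or_nonempty with rfl | hne
  · simp
  obtain ⟨x, hx⟩ := hKc.exists_isLeast hne
  obtain ⟨y, hy⟩ := hKc.exists_isGreatest hne
  rw [← ofReal_measureReal (measure_ne_top ρ K)]
  refine ENNReal.ofReal_le_ofReal ?_
  calc ρ.real K ≤ ρ.real (Set.Icc x y) := measureReal_mono fun z hz => ⟨hx.2 hz, hy.2 hz⟩
    _ = ρ.real (Set.Iic y) - ρ.real (Set.Iic x) := measureReal_Icc_eq_sub (hx.2 hy.1)
    _ ≤ b - a := sub_le_sub (hK hy.1).2 (hK hx.1).1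

lemma isBracket_measureReal_Iic (a : ℝ) (ε : ℝ≥0) :
    IsBracket ρ ε {x | ρ.real (Set.Iic x) < a} {x | ρ.real (Set.Iic x) ≤ a + ε} where
  null_frontier_left := (subsingleton_frontier_of_isLowerSet
    fun _ _ hyx hx => (monotone_measureReal_Iic hyx).trans_lt hx).measure_zero ρ
  null_frontier_right := (subsingleton_frontier_of_isLowerSet
    fun _ _ hyx hx => (monotone_measureReal_Iic hyx).trans hx).measure_zero ρ
  measure_sdiff_le := by
    have hsub : {x | ρ.real (Set.Iic x) ≤ a + ε} \ {x | ρ.real (Set.Iic x) < a} ⊆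
        {x | ρ.real (Set.Iic x) ∈ Set.Icc a (a + ε)} := fun x hx => ⟨not_lt.1 hx.2, hx.1⟩
    simpa using (measure_mono hsub).trans (measure_measureReal_Iic_mem_Icc_le a (a + ε))

variable (ρ)

lemma hasFiniteBracketing_isLowerSet : HasFiniteBracketing ρ {S | IsLowerSet S} := by
  intro ε hε
  refine ⟨(fun k : ℕ => ({x | ρ.real (Set.Iic x) < k * ε}, {x | ρ.real (Set.Iic x) ≤ k * ε + ε})) ''
    Set.Iic ⌊ρ.real Set.univ / ε⌋₊, (Set.finite_Iic _).image _, ?_, fun S hS => ?_⟩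
  · rintro _ ⟨k, -, rfl⟩
    exact isBracket_measureReal_Iic (k * ε) ε
  have hε' : (0 : ℝ) < ε := hε
  refine ⟨_, ⟨⌊ρ.real S / ε⌋₊, Nat.floor_mono ?_, rfl⟩, ?_, ?_⟩
  · exact div_le_div_of_nonneg_right (measureReal_mono (Set.subset_univ S)) hε'.le
  · have hfloor : ⌊ρ.real S / ε⌋₊ * (ε : ℝ) ≤ ρ.real S :=
      (le_div_iff₀ hε').1 (Nat.floor_le (by positivity))
    exact fun x hx => (mem_Icc_measureReal_Iic_of_isLowerSet hS).1 (hx.trans_le hfloor)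
  · have hfloor : ρ.real S < ⌊ρ.real S / ε⌋₊ * (ε : ℝ) + ε := by
      simpa only [add_one_mul] using (div_lt_iff₀ hε').1 (Nat.lt_floor_add_one (ρ.real S / ε))
    exact fun x hx => ((mem_Icc_measureReal_Iic_of_isLowerSet hS).2 hx).trans hfloor.le

lemma hasFiniteBracketing_ordConnected : HasFiniteBracketing ρ {S | S.OrdConnected} := by
  have hlower := hasFiniteBracketing_isLowerSet ρ
  refine (hlower.image_compl.image2_inter hlower).mono fun S hS => ?_
  exact ⟨upperClosure S, ⟨_, (upperClosure S).upper.compl, compl_compl _⟩, lowerClosure S,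
    (lowerClosure S).lower, hS.upperClosure_inter_lowerClosure⟩

end LinearOrder

section Rectangles

lemma isRect_Iic {d : ℕ} (t : Fin d → ℝ) : IsRect {x | ∀ i, x i ≤ t i} :=
  ⟨fun i => Set.Iic (t i), fun _ => Set.ordConnected_Iic, (Set.pi_univ_Iic t).symm⟩

lemma tendsto_ksDist_of_tendstoUniformlyOn {d : ℕ} {l : Filter ι}
    {μ : ι → Measure (Fin d → ℝ)} {ν : Measure (Fin d → ℝ)}
    (h : TendstoUniformlyOn (fun i => (μ i).real) ν.real l {R | IsRect R}) :
    Tendsto (fun i => ksDist (μ i) ν) l (𝓝 0) := by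
  rw [Metric.tendstoUniformlyOn_iff] at h
  refine tendsto_order.2 ⟨fun c hc => .of_forall fun i => ?_, fun c hc => ?_⟩
  · exact hc.trans_le (Real.iSup_nonneg fun _ => abs_nonneg _)
  · filter_upwards [h (c / 2) (half_pos hc)] with i hi
    refine (Real.iSup_le (fun R => ?_) (half_pos hc).le).trans_lt (half_lt_self hc)
    exact (dist_comm _ _).trans_le (hi R.1 R.2).le

variable {d : ℕ} {ν : Measure (Fin d → ℝ)} [IsFiniteMeasure ν]

lemma measure_Iic_inter_eval_eq_zero_of_continuous_mcdf (hcdf : Continuous (mcdf ν))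
    (t : Fin d → ℝ) (i : Fin d) :
    ν (Set.Iic t ∩ {x | x i = t i}) = 0 := by
  have hle : ∀ s < t i, ν.real (Set.Iic t ∩ {x | x i = t i}) ≤
      mcdf ν t - mcdf ν (Function.update t i s) := by
    intro s hs
    have hst : Set.Iic (Function.update t i s) ⊆ Set.Iic t :=
      Set.Iic_subset_Iic.2 (update_le_self_iff.2 hs.le)
    calc ν.real (Set.Iic t ∩ {x | x i = t i})
        ≤ ν.real (Set.Iic t \ Set.Iic (Function.update t i s)) := by
          refine measureReal_mono fun x hx => ⟨hx.1, fun hxs => ?_⟩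
          have hxi : x i ≤ s := by simpa using hxs i
          exact (hx.2 ▸ hxi).not_gt hs
      _ = mcdf ν t - mcdf ν (Function.update t i s) := measureReal_sdiff hst measurableSet_Iic
  have hlim : Tendsto (fun s => mcdf ν t - mcdf ν (Function.update t i s)) (𝓝[<] t i) (𝓝 0) := by
    have hcont : Continuous fun s => mcdf ν t - mcdf ν (Function.update t i s) := by fun_prop
    simpa using (hcont.tendsto (t i)).mono_left nhdsWithin_le_nhds
  have hle_zero := ge_of_tendsto hlim (eventually_nhdsWithin_of_forall hle)
  exact (measureReal_eq_zero_iff).1 (hle_zero.antisymm measureReal_nonneg)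

lemma nullSingletonClass_map_eval_of_continuous_mcdf (hcdf : Continuous (mcdf ν)) (i : Fin d) :
    NullSingletonClass (ν.map fun x => x i) := by
  refine ⟨fun a => ?_⟩
  rw [Measure.map_apply (measurable_pi_apply i) (measurableSet_singleton a)]
  let t : ℕ → Fin d → ℝ := fun n => Function.update (fun _ => (n : ℝ)) i a
  have hcover : (fun x : Fin d → ℝ => x i) ⁻¹' {a} ⊆ ⋃ n, Set.Iic (t n) ∩ {x | x i = t n i} := by
    intro x hx
    obtain ⟨M, hM⟩ := (Set.finite_range x).bddAbove
    obtain ⟨n, hn⟩ := exists_nat_ge M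
    have hxi : x i = a := hx
    refine Set.mem_iUnion.2 ⟨n, le_update_iff.2 ⟨hxi.le, fun j _ => ?_⟩, ?_⟩
    · exact (hM (Set.mem_range_self j)).trans hn
    · simpa [t] using hxi
  exact measure_mono_null hcover
    (measure_iUnion_null fun n =>
      measure_Iic_inter_eval_eq_zero_of_continuous_mcdf hcdf (t n) i)

lemma hasFiniteBracketing_isRect (hν : ∀ i, NullSingletonClass (ν.map fun x => x i)) :
    HasFiniteBracketing ν {R | IsRect R} := by
  have hslab : ∀ i : Fin d, HasFiniteBracketing ν
      (Set.preimage (fun x => x i) '' {S : Set ℝ | S.OrdConnected}) := fun i =>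
    (hasFiniteBracketing_ordConnected _).image_preimage (continuous_apply i)
      (measurable_pi_apply i).aemeasurable
  refine (HasFiniteBracketing.image_biInter Finset.univ fun i _ => hslab i).mono ?_
  rintro _ ⟨I, hI, rfl⟩
  exact ⟨fun i => (fun x => x i) ⁻¹' I i, fun i _ => ⟨I i, hI i, rfl⟩, by simp [Set.pi_def]⟩

end Rectangles

theorem statement11_general {d : ℕ} {l : Filter ι} (μ : ι → Measure (Fin d → ℝ))
    [∀ i, IsFiniteMeasure (μ i)] (ν : Measure (Fin d → ℝ)) [IsFiniteMeasure ν]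
    (hconv : TendstoInDist l μ ν) (hcdf : Continuous (mcdf ν)) :
    TendstoUniformly (fun i => mcdf (μ i)) (mcdf ν) l ∧
      Tendsto (fun i => ksDist (μ i) ν) l (𝓝 0) := by
  have hrect : HasFiniteBracketing ν {R | IsRect R} :=
    hasFiniteBracketing_isRect (nullSingletonClass_map_eval_of_continuous_mcdf hcdf)
  have hunif : TendstoUniformlyOn (fun i => (μ i).real) ν.real l {R | IsRect R} :=
    hrect.tendstoUniformlyOn_measureReal hconv
  refine ⟨?_, tendsto_ksDist_of_tendstoUniformlyOn hunif⟩
  have horthants := hunif.comp fun t : Fin d → ℝ => {x | ∀ i, x i ≤ t i}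
  exact tendstoUniformlyOn_univ.1 (horthants.mono fun t _ => isRect_Iic t)

/-- Lemma A.7, multivariate Polya theorem: if `X_n → X` in distribution
in `ℝ^d` and `X` has a continuous cdf, then the multivariate cdfs converge uniformly,
and consequently the KS distance over axis-aligned rectangles tends to 0. -/
theorem statement11 {d : ℕ}
    (μ : ℕ → Measure (Fin d → ℝ)) (hμ : ∀ n, IsProbabilityMeasure (μ n))
    (ν : Measure (Fin d → ℝ)) (hν : IsProbabilityMeasure ν)
    (hconv : TendstoInDist atTop μ ν)
    (hcdf : Continuous (mcdf ν)) :
    TendstoUniformly (fun n => mcdf (μ n)) (mcdf ν) atTop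
    ∧ Tendsto (fun n => ksDist (μ n) ν) atTop (𝓝 0) :=
  statement11_general μ ν hconv hcdf
end

section
/- If a mechanism M satisfies ε-DP, i.e. P(M(x) ∈ S) ≤ e^ε P(M(x') ∈ S) for all measurable S and all neighboring datasets x, x', then M satisfies (0, (e^ε − 1)/(e^ε + 1))-DP; that is, for all neighboring x, x', the total variation distance between the distributions of M(x) and M(x') is at most (e^ε − 1)/(e^ε + 1). -/
open MeasureTheory Filter Topology
open scoped ENNReal

/-!
If `P ≤ c • Q` and `Q ≤ c • P`, apply the first inequality to `S` and the second to `Sᶜ`: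
for probability measures, `P(S) ≤ c Q(S)` and `1 - Q(S) ≤ c (1 - P(S))`. Their sum is
`(c + 1) (P(S) - Q(S)) ≤ c - 1`.
-/

section LeSMul

open Set
open scoped NNReal

variable {α : Type*} [MeasurableSpace α] {P Q : Measure α} {c : ℝ≥0}

theorem measureReal_le_mul_of_le_smul [IsFiniteMeasure Q] (hPQ : P ≤ c • Q) (S : Set α) :
    P.real S ≤ c * Q.real S :=
  calc
    P.real S ≤ (c • Q).real S := ENNReal.toReal_mono (measure_ne_top (c • Q) S) (hPQ S)
    _ = c * Q.real S := measureReal_nnreal_smul_apply c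

theorem measureReal_sub_le_of_le_smul [IsFiniteMeasure P] [IsFiniteMeasure Q]
    (hmass : P.real univ = Q.real univ) (hPQ : P ≤ c • Q) (hQP : Q ≤ c • P)
    {S : Set α} (hS : MeasurableSet S) :
    P.real S - Q.real S ≤ (c - 1) / (c + 1) * P.real univ := by
  have hset : P.real S ≤ c * Q.real S := measureReal_le_mul_of_le_smul hPQ S
  have hcompl : P.real univ - Q.real S ≤ c * (P.real univ - P.real S) := by
    simpa only [measureReal_compl hS, hmass] using measureReal_le_mul_of_le_smul hQP Sᶜ
  rw [div_mul_eq_mul_div, le_div_iff₀ (by positivity)]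
  linarith

theorem tvDist_le_of_le_smul [IsFiniteMeasure P] [IsFiniteMeasure Q]
    (hmass : P.real univ = Q.real univ) (hPQ : P ≤ c • Q) (hQP : Q ≤ c • P) :
    tvDist P Q ≤ (c - 1) / (c + 1) * P.real univ := by
  have : Nonempty {S : Set α // MeasurableSet S} := ⟨⟨∅, .empty⟩⟩
  refine ciSup_le fun ⟨S, hS⟩ => abs_sub_le_iff.mpr ⟨?_, ?_⟩
  · exact measureReal_sub_le_of_le_smul hmass hPQ hQP hS
  · rw [hmass]
    exact measureReal_sub_le_of_le_smul hmass.symm hQP hPQ hS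

end LeSMul

/-- Lemma A.11, part 2: if `P` and `Q` satisfy the `ε`-DP constraint
(`P(S) ≤ e^ε Q(S)` and `Q(S) ≤ e^ε P(S)` for all measurable `S`), then
`TV(P, Q) ≤ (e^ε − 1)/(e^ε + 1)`. -/
theorem statement14 {α : Type*} [MeasurableSpace α]
    (P Q : Measure α) (hP : IsProbabilityMeasure P) (hQ : IsProbabilityMeasure Q)
    (ε : ℝ)
    (hDP : ∀ S : Set α, MeasurableSet S →
      P S ≤ ENNReal.ofReal (Real.exp ε) * Q S ∧
      Q S ≤ ENNReal.ofReal (Real.exp ε) * P S) :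
    tvDist P Q ≤ (Real.exp ε - 1) / (Real.exp ε + 1) := by
  have hPQ : P ≤ (Real.exp ε).toNNReal • Q := Measure.le_iff.mpr fun S hS => (hDP S hS).1
  have hQP : Q ≤ (Real.exp ε).toNNReal • P := Measure.le_iff.mpr fun S hS => (hDP S hS).2
  have hmass : P.real Set.univ = Q.real Set.univ := by simp only [probReal_univ]
  simpa only [Real.coe_toNNReal _ (Real.exp_pos ε).le, probReal_univ, mul_one] using
    tvDist_le_of_le_smul hmass hPQ hQP
end

section
/- If a mechanism M satisfies (ε,δ)-DP, i.e. P(M(x) ∈ S) ≤ e^ε P(M(x') ∈ S) + δ for all measurable S and all neighboring datasets x, x', then M satisfies (0, (2δ + e^ε − 1)/(e^ε + 1))-DP; that is, the total variation distance between the output distributions of M on any pair of neighboring datasets is at most (2δ + e^ε − 1)/(e^ε + 1). -/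
open MeasureTheory Filter Topology
open scoped ENNReal

lemma toReal_le_mul_toReal_add {a b : ℝ≥0∞} {c d : ℝ} (hb : b ≠ ∞) (hc : 0 ≤ c) (hd : 0 ≤ d)
    (h : a ≤ ENNReal.ofReal c * b + ENNReal.ofReal d) : a.toReal ≤ c * b.toReal + d :=
  ENNReal.toReal_le_of_le_ofReal (by positivity) <| by
    rwa [ENNReal.ofReal_add (by positivity) hd, ENNReal.ofReal_mul hc, ENNReal.ofReal_toReal hb]

section TotalVariation

variable {α : Type*} [MeasurableSpace α] {P Q : Measure α}

lemma tvDist_le {r : ℝ} (h : ∀ S, MeasurableSet S → |P.real S - Q.real S| ≤ r) :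
    tvDist P Q ≤ r :=
  haveI : Nonempty {S : Set α // MeasurableSet S} := ⟨⟨∅, .empty⟩⟩
  ciSup_le fun S => h S.1 S.2

variable [IsFiniteMeasure P] [IsFiniteMeasure Q] {c δ : ℝ}

lemma measureReal_sub_le_of_le_of_compl_le (hmass : P.real Set.univ = Q.real Set.univ)
    (hc : -1 < c) {S : Set α} (hS : MeasurableSet S) (h : P.real S ≤ c * Q.real S + δ)
    (hcompl : Q.real Sᶜ ≤ c * P.real Sᶜ + δ) :
    P.real S - Q.real S ≤ (2 * δ + (c - 1) * P.real Set.univ) / (c + 1) := by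
  rw [measureReal_compl hS, measureReal_compl hS, ← hmass] at hcompl
  rw [le_div_iff₀ (by linarith)]
  -- The sum of `h` and `hcompl` involves `P.real S` and `Q.real S` only through their difference.
  linarith

theorem statement15_general (hmass : P.real Set.univ = Q.real Set.univ) (hc : -1 < c)
    (hPQ : ∀ S, MeasurableSet S → P.real S ≤ c * Q.real S + δ)
    (hQP : ∀ S, MeasurableSet S → Q.real S ≤ c * P.real S + δ) :
    tvDist P Q ≤ (2 * δ + (c - 1) * P.real Set.univ) / (c + 1) := by
  refine tvDist_le fun S hS => abs_sub_le_iff.2 ⟨?_, ?_⟩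
  · exact measureReal_sub_le_of_le_of_compl_le hmass hc hS (hPQ S hS) (hQP Sᶜ hS.compl)
  · rw [hmass]
    exact measureReal_sub_le_of_le_of_compl_le hmass.symm hc hS (hQP S hS) (hPQ Sᶜ hS.compl)

end TotalVariation

/-- Lemma A.11, part 3: if `P` and `Q` satisfy the `(ε,δ)`-DP constraint
(`P(S) ≤ e^ε Q(S) + δ` and `Q(S) ≤ e^ε P(S) + δ` for all measurable `S`), then
`TV(P, Q) ≤ (2δ + e^ε − 1)/(e^ε + 1)`. -/
theorem statement15 {α : Type*} [MeasurableSpace α]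
    (P Q : Measure α) (hP : IsProbabilityMeasure P) (hQ : IsProbabilityMeasure Q)
    (ε δ : ℝ) (hδ : 0 ≤ δ)
    (hDP : ∀ S : Set α, MeasurableSet S →
      P S ≤ ENNReal.ofReal (Real.exp ε) * Q S + ENNReal.ofReal δ ∧
      Q S ≤ ENNReal.ofReal (Real.exp ε) * P S + ENNReal.ofReal δ) :
    tvDist P Q ≤ (2 * δ + Real.exp ε - 1) / (Real.exp ε + 1) := by
  have hc := Real.exp_pos ε
  simpa [add_sub_assoc] using statement15_general (P := P) (Q := Q) (by simp) (by linarith)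
    (fun S hS => toReal_le_mul_toReal_add (measure_ne_top Q S) hc.le hδ (hDP S hS).1)
    (fun S hS => toReal_le_mul_toReal_add (measure_ne_top P S) hc.le hδ (hDP S hS).2)
end

section
/- For every ε > 0 and every integer n0 ≥ 1, the normalized discrete-Gaussian first absolute moment satisfies (Σ_{k=1}^∞ |k − n0| exp(−(ε²/2)(k − n0)²)) / (Σ_{k=1}^∞ exp(−(ε²/2)(k − n0)²)) ≤ 2/ε. Equivalently, if p(n | n_dp = n0) ∝ exp(−(ε²/2)(n − n0)²) on n ∈ {1,2,...}, then E_{n | n_dp = n0} |n − n0| ≤ 2/ε, and this bound tends to 0 as ε → ∞. -/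
/-!
Center the weights at `n0` and split the sum over `{1, 2, ...}` into a finite left half, the
central term, and an infinite right half. With `w x = exp (-(ε² / 2) x²)`, the inequality
`1 + t ≤ exp t` bounds the decrement `w (y - 1) - w y` from below by `(ε² / 2) (2 y - 1) w y`, and
completing a square turns this into `2 ε y w y ≤ 2 w y + y (w (y - 1) - w y)` for `y ≥ 1`. Summation
by parts then gives `2 ε ∑ y w y ≤ 1 + 3 ∑ w y` over `y = 1, ..., M` for every `M`, hence over each
half. Adding the two halves, the central weight `w 0 = 1` absorbs the two constants.
-/

open Filter Topology

lemma sum_range_succ_mul_sub {R : Type*} [Ring R] (a : ℕ → R) (M : ℕ) :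
    ∑ j ∈ Finset.range M, ((j + 1 : ℕ) : R) * (a j - a (j + 1)) =
      a 0 + ∑ j ∈ Finset.range M, a (j + 1) - (M + 1) * a M := by
  induction M with
  | zero => simp
  | succ M ih =>
    rw [Finset.sum_range_succ, Finset.sum_range_succ, ih]
    push_cast
    noncomm_ring

lemma sum_range_nat_sub_of_even {R E : Type*} [AddCommGroupWithOne R] [AddCommMonoid E] {f : R → E}
    (hf : Function.Even f) (m : ℕ) :
    ∑ k ∈ Finset.range m, f (k - m) = ∑ j ∈ Finset.range m, f (j + 1 : ℕ) := by
  rw [← Finset.sum_range_reflect]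
  refine Finset.sum_congr rfl fun j hj => ?_
  have hjm : j + 1 ≤ m := Finset.mem_range.1 hj
  rw [← hf, Nat.sub_sub, Nat.add_comm 1 j, Nat.cast_sub hjm]
  congr 1
  abel

lemma tsum_nat_sub_of_even {R E : Type*} [AddCommGroupWithOne R] [AddCommGroup E]
    [TopologicalSpace E] [IsTopologicalAddGroup E] [T2Space E] {f : R → E} (hf : Function.Even f)
    (hsum : Summable fun j : ℕ => f j) (m : ℕ) :
    ∑' k : ℕ, f (k - m) =
      ∑ j ∈ Finset.range m, f (j + 1 : ℕ) + f 0 + ∑' j : ℕ, f (j + 1 : ℕ) := by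
  have hshift : Summable fun k : ℕ => f (k - m) :=
    (summable_nat_add_iff m).1 (by simpa using hsum)
  rw [← hshift.sum_add_tsum_nat_add m, sum_range_nat_sub_of_even hf, add_assoc]
  simp only [Nat.cast_add, add_sub_cancel_right]
  rw [hsum.tsum_eq_zero_add, Nat.cast_zero]
  simp only [Nat.cast_add]

lemma tsum_one_le_sub_succ {R E : Type*} [AddCommGroupWithOne R] [AddCommMonoid E]
    [TopologicalSpace E] (f : R → E) (m : ℕ) :
    ∑' k : {k : ℕ // 1 ≤ k}, f (k.1 - (m + 1 : ℕ)) = ∑' k : ℕ, f (k - m) :=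
  (tsum_pnat_eq_tsum_succ (f := fun k : ℕ => f (k - (m + 1 : ℕ)))).trans
    (tsum_congr fun k => by simp only [Nat.cast_add, Nat.cast_one, add_sub_add_right_eq_sub])

/-- The unnormalized density at `x` of the centered Gaussian with standard deviation `1 / ε`. Its
translates by integers are the weights of the discrete Gaussian posterior. -/
noncomputable def gaussianWeight (ε x : ℝ) : ℝ :=
  Real.exp (-(ε ^ 2 / 2 * x ^ 2))

section GaussianWeight

variable (ε : ℝ)

lemma gaussianWeight_pos (x : ℝ) : 0 < gaussianWeight ε x :=
  Real.exp_pos _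

lemma gaussianWeight_zero : gaussianWeight ε 0 = 1 := by
  simp [gaussianWeight]

lemma gaussianWeight_even : Function.Even (gaussianWeight ε) := fun x => by
  simp [gaussianWeight]

lemma mul_gaussianWeight_add_one_le_sub (x : ℝ) :
    ε ^ 2 / 2 * (2 * x + 1) * gaussianWeight ε (x + 1) ≤
      gaussianWeight ε x - gaussianWeight ε (x + 1) := by
  have ratio : gaussianWeight ε x =
      Real.exp (ε ^ 2 / 2 * (2 * x + 1)) * gaussianWeight ε (x + 1) := by
    rw [gaussianWeight, gaussianWeight, ← Real.exp_add]
    ring_nf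
  have tangent := mul_le_mul_of_nonneg_right
    (Real.add_one_le_exp (ε ^ 2 / 2 * (2 * x + 1))) (gaussianWeight_pos ε (x + 1)).le
  linarith

lemma two_mul_add_one_mul_gaussianWeight_le {x : ℝ} (hx : 0 ≤ x) :
    2 * ε * ((x + 1) * gaussianWeight ε (x + 1)) ≤
      2 * gaussianWeight ε (x + 1) +
        (x + 1) * (gaussianWeight ε x - gaussianWeight ε (x + 1)) := by
  have amgm : 2 * ε * (x + 1) ≤ 2 + (x + 1) * (ε ^ 2 / 2 * (2 * x + 1)) := by
    have slack : 0 ≤ ε ^ 2 * (x * (x + 1)) := by positivity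
    linarith [sq_nonneg (ε * (x + 1) - 2)]
  calc 2 * ε * ((x + 1) * gaussianWeight ε (x + 1))
      = 2 * ε * (x + 1) * gaussianWeight ε (x + 1) := by ring
    _ ≤ (2 + (x + 1) * (ε ^ 2 / 2 * (2 * x + 1))) * gaussianWeight ε (x + 1) :=
        mul_le_mul_of_nonneg_right amgm (gaussianWeight_pos ε _).le
    _ = 2 * gaussianWeight ε (x + 1) +
          (x + 1) * (ε ^ 2 / 2 * (2 * x + 1) * gaussianWeight ε (x + 1)) := by ring
    _ ≤ _ := by gcongr; exact mul_gaussianWeight_add_one_le_sub ε x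

end GaussianWeight

lemma two_mul_sum_range_mul_gaussianWeight_le (ε : ℝ) (M : ℕ) :
    2 * ε * ∑ j ∈ Finset.range M, ((j + 1 : ℕ) : ℝ) * gaussianWeight ε (j + 1 : ℕ) ≤
      1 + 3 * ∑ j ∈ Finset.range M, gaussianWeight ε (j + 1 : ℕ) := by
  have termwise : ∀ j ∈ Finset.range M,
      2 * ε * (((j + 1 : ℕ) : ℝ) * gaussianWeight ε (j + 1 : ℕ)) ≤
        2 * gaussianWeight ε (j + 1 : ℕ) +
          ((j + 1 : ℕ) : ℝ) * (gaussianWeight ε j - gaussianWeight ε (j + 1 : ℕ)) :=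
    fun j _ => by exact_mod_cast two_mul_add_one_mul_gaussianWeight_le ε j.cast_nonneg
  have summed := Finset.sum_le_sum termwise
  rw [← Finset.mul_sum, Finset.sum_add_distrib, ← Finset.mul_sum,
    sum_range_succ_mul_sub (fun j : ℕ => gaussianWeight ε j),
    Nat.cast_zero, gaussianWeight_zero] at summed
  have boundary : 0 ≤ ((M : ℝ) + 1) * gaussianWeight ε M :=
    mul_nonneg (by positivity) (gaussianWeight_pos ε M).le
  linarith

lemma summable_pow_mul_gaussianWeight {ε : ℝ} (hε : ε ≠ 0) (p : ℕ) :
    Summable fun j : ℕ => (j : ℝ) ^ p * gaussianWeight ε j := by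
  have bound := summable_pow_mul_jacobiTheta₂_term_bound 0
    (T := ε ^ 2 / 2 / Real.pi) (by positivity) p
  refine (bound.comp_injective Nat.cast_injective).congr fun j => ?_
  simp only [Function.comp_apply, gaussianWeight, Int.cast_natCast, Int.cast_abs, Nat.abs_cast]
  congr 2
  field_simp
  ring

lemma summable_gaussianWeight {ε : ℝ} (hε : ε ≠ 0) :
    Summable fun j : ℕ => gaussianWeight ε j := by
  simpa using summable_pow_mul_gaussianWeight hε 0

lemma two_mul_tsum_mul_gaussianWeight_le {ε : ℝ} (hε : ε ≠ 0) :
    2 * ε * ∑' j : ℕ, ((j + 1 : ℕ) : ℝ) * gaussianWeight ε (j + 1 : ℕ) ≤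
      1 + 3 * ∑' j : ℕ, gaussianWeight ε (j + 1 : ℕ) := by
  have moment : Summable fun j : ℕ => ((j + 1 : ℕ) : ℝ) * gaussianWeight ε (j + 1 : ℕ) := by
    simpa using (summable_nat_add_iff 1).2 (summable_pow_mul_gaussianWeight hε 1)
  have mass : Summable fun j : ℕ => gaussianWeight ε (j + 1 : ℕ) :=
    (summable_nat_add_iff 1).2 (summable_gaussianWeight hε)
  exact le_of_tendsto_of_tendsto' (moment.tendsto_sum_tsum_nat.const_mul _)
    ((mass.tendsto_sum_tsum_nat.const_mul 3).const_add 1)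
    (two_mul_sum_range_mul_gaussianWeight_le ε)

lemma tsum_abs_sub_mul_gaussianWeight_le {ε : ℝ} (hε : 0 < ε) (m : ℕ) :
    ∑' k : ℕ, |(k : ℝ) - m| * gaussianWeight ε (k - m) ≤
      2 / ε * ∑' k : ℕ, gaussianWeight ε (k - m) := by
  have moment_even : Function.Even fun x : ℝ => |x| * gaussianWeight ε x := fun x => by
    simp only [abs_neg, gaussianWeight_even ε x]
  have moment_split := tsum_nat_sub_of_even moment_even
    (by simpa using summable_pow_mul_gaussianWeight hε.ne' 1) m
  have mass_split := tsum_nat_sub_of_even (gaussianWeight_even ε)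
    (summable_gaussianWeight hε.ne') m
  simp only [Nat.abs_cast, abs_zero, zero_mul, add_zero] at moment_split
  have left_moment := two_mul_sum_range_mul_gaussianWeight_le ε m
  have right_moment := two_mul_tsum_mul_gaussianWeight_le hε.ne'
  have left_mass : 0 ≤ ∑ j ∈ Finset.range m, gaussianWeight ε (j + 1 : ℕ) :=
    Finset.sum_nonneg fun j _ => (gaussianWeight_pos ε _).le
  have right_mass : 0 ≤ ∑' j : ℕ, gaussianWeight ε (j + 1 : ℕ) :=
    tsum_nonneg fun j => (gaussianWeight_pos ε _).le
  rw [moment_split, mass_split, gaussianWeight_zero, div_mul_eq_mul_div, le_div_iff₀ hε]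
  linarith

/-- Lemma A.12, part 2: for every `ε > 0` and integer `n0 ≥ 1`, the
normalized discrete-Gaussian first absolute moment satisfies
`(∑_{k ≥ 1} |k − n0| e^{−(ε²/2)(k − n0)²}) / (∑_{k ≥ 1} e^{−(ε²/2)(k − n0)²}) ≤ 2/ε`;
i.e. if `p(n | n_dp = n0) ∝ exp(−(ε²/2)(n − n0)²)` on `{1,2,...}`, then
`E_{n | n_dp = n0}|n − n0| ≤ 2/ε`; moreover this bound tends to 0 as `ε → ∞`. -/
theorem statement18 :
    (∀ ε : ℝ, 0 < ε → ∀ n0 : ℕ, 1 ≤ n0 →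
      (∑' k : {k : ℕ // 1 ≤ k},
          |(k.1 : ℝ) - (n0 : ℝ)| * Real.exp (-(ε ^ 2 / 2 * ((k.1 : ℝ) - (n0 : ℝ)) ^ 2))) /
        (∑' k : {k : ℕ // 1 ≤ k},
          Real.exp (-(ε ^ 2 / 2 * ((k.1 : ℝ) - (n0 : ℝ)) ^ 2)))
        ≤ 2 / ε)
    ∧ Tendsto (fun ε : ℝ => 2 / ε) atTop (𝓝 0) := by
  refine ⟨fun ε hε n0 hn0 => ?_, tendsto_const_nhds.div_atTop tendsto_id⟩
  obtain ⟨m, rfl⟩ := Nat.exists_eq_add_of_le' hn0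
  refine div_le_of_le_mul₀ (tsum_nonneg fun k => (Real.exp_pos _).le) (by positivity) ?_
  calc _ = ∑' k : ℕ, |(k : ℝ) - m| * gaussianWeight ε (k - m) :=
        tsum_one_le_sub_succ (fun x : ℝ => |x| * gaussianWeight ε x) m
    _ ≤ 2 / ε * ∑' k : ℕ, gaussianWeight ε (k - m) := tsum_abs_sub_mul_gaussianWeight_le hε m
    _ = _ := congrArg (2 / ε * ·) (tsum_one_le_sub_succ (gaussianWeight ε) m).symm
end
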